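/- arXiv:math/0204143 — 2 statements merged into one kernel-verified Lean document; each statement's English description precedes it below -/
import Mathlib

section
/- For every cardinal number α ≥ 𝔠 and every index set Q with |Q| = α, there exists a family {(G_q, H_q) : q ∈ Q} of pairs of metrizable topological spaces, each of cardinality α, such that for every q ∈ Q: G_q is homeomorphic to a clopen subset of H_q, H_q is homeomorphic to a clopen subset of G_q, but G_q is not homeomorphic to H_q; and moreover, whenever q ≠ q', there exists no injective continuous map from any of the spaces G_q, H_q into any of the spaces G_{q'}, H_{q'}. -/
universe u

open Cardinal

/-- `A` is homeomorphic to a clopen subset of `B`. -/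
def HomeoToClopenSubset (A : Type*) [TopologicalSpace A]
    (B : Type*) [TopologicalSpace B] : Prop :=
  ∃ t : Set B, IsClopen t ∧ Nonempty (A ≃ₜ t)

/-- There exists no injective continuous map from `A` into `B`. -/
def NoInjCont (A : Type*) [TopologicalSpace A]
    (B : Type*) [TopologicalSpace B] : Prop :=
  ¬ ∃ f : A → B, Continuous f ∧ Function.Injective f

/-- The conditions on a single pair `(G, H)`: both metrizable of cardinality `α`,
each is homeomorphic to a clopen subset of the other, but `G` and `H` are not
homeomorphic. -/
def Stmt10Pair (α : Cardinal.{u}) (G H : Type u)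
    [TopologicalSpace G] [TopologicalSpace H] : Prop :=
  TopologicalSpace.MetrizableSpace G ∧ TopologicalSpace.MetrizableSpace H ∧
  #G = α ∧ #H = α ∧
  HomeoToClopenSubset G H ∧ HomeoToClopenSubset H G ∧ IsEmpty (G ≃ₜ H)

/-!
There is a dense connected set `K` in `ℝ^ℤ` which is so rigid that the identity is its only
continuous injection into itself. All the spaces are unions of graphs of continuous functions on
`K`, made such that every continuous injection of `K` into them parametrizes one of these graphs.
Hence a continuous injection between two of the spaces is an injection of index sets which preserves
all coincidences of the graphs.

For the failure of the Cantor–Bernstein property, the graphs of the shifts by `⌊k / 2⌋` are arranged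
at heights `k` tending to `∞`, where the constant functions with values in the Cantor set `{0, 1}^ℤ`
are put. The spaces with `k ≥ 0`, `k ≥ 1` and `k ≥ 2` are each clopen in the preceding one, and the
first and the third are homeomorphic by the shift. A homeomorphism between the first and the second
would match their heights and, by convergence to the limit graphs, preserve the pairs
`{2 m, 2 m + 1}` with finitely many exceptions. This contradicts parity, as in the second space the
height `1` has no partner.

The spaces of a large family are told apart by adding a connected space that encodes, in the way in
which copies of `K` are glued together, a well-order with a chosen element. An `ω`-sequence
converging to each limit of cofinality `ω` is encoded as well, which leaves the well-order without
nontrivial strictly monotone self-maps.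
-/

namespace ClopenCantorBernstein

universe v w

open Set Filter Topology

section Ladders

variable {V : Type*} [LinearOrder V] {v : V}

/-- `v` is a limit of cofinality `ω`: the supremum of a strictly increasing sequence. -/
def IsOmegaLimit (v : V) : Prop :=
  ∃ a : ℕ → V, StrictMono a ∧ IsLUB (range a) v

open Classical in
/-- A chosen ladder, that is, a strictly increasing sequence with supremum `v`. If `v` is not an
`ω`-limit, the value is the junk sequence constantly equal to `v`. -/
noncomputable def ladder (v : V) : ℕ → V :=
  if h : IsOmegaLimit v then h.choose else fun _ => v

theorem ladder_of_not_isOmegaLimit (h : ¬ IsOmegaLimit v) (n : ℕ) : ladder v n = v := by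
  simp only [ladder, dif_neg h]

theorem IsOmegaLimit.strictMono_ladder (h : IsOmegaLimit v) : StrictMono (ladder v) := by
  simpa only [ladder, dif_pos h] using h.choose_spec.1

theorem IsOmegaLimit.isLUB_ladder (h : IsOmegaLimit v) : IsLUB (range (ladder v)) v := by
  simpa only [ladder, dif_pos h] using h.choose_spec.2

theorem IsOmegaLimit.ladder_lt (h : IsOmegaLimit v) (n : ℕ) : ladder v n < v :=
  (h.strictMono_ladder n.lt_succ_self).trans_le (h.isLUB_ladder.1 (mem_range_self _))

theorem exists_isLUB [WellFoundedLT V] [OrderTop V] (s : Set V) : ∃ v, IsLUB s v := by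
  have hs : (upperBounds s).Nonempty := ⟨⊤, fun _ _ => le_top⟩
  exact ⟨wellFounded_lt.min _ hs, wellFounded_lt.min_mem _ hs,
    fun w hw => not_lt.1 (wellFounded_lt.not_lt_min _ hw)⟩

/-- If `f` moved `x`, let `v` be the supremum of the orbit of `x`. Then `f` fixes `v` and hence
every rung of its ladder, but the orbit has to pass these rungs. -/
theorem eq_id_of_map_ladder [WellFoundedLT V] [OrderTop V] {f : V → V} (hf : StrictMono f)
    (hladder : ∀ v, IsOmegaLimit v → ∀ n, f (ladder v n) = ladder (f v) n) : f = id := by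
  funext x
  by_contra hne
  have hx : x < f x := hf.le_apply.lt_of_ne (Ne.symm hne)
  obtain ⟨v, hv⟩ := exists_isLUB (range fun k => f^[k] x)
  have hlim : IsOmegaLimit v := ⟨_, hf.strictMono_iterate_of_lt_map hx, hv⟩
  have map_lt : ∀ y < v, f y < v := fun y hy => by
    obtain ⟨_, ⟨k, rfl⟩, hk⟩ := (lt_isLUB_iff hv).1 hy
    refine (hf hk).trans_le (hv.1 ⟨k + 1, ?_⟩)
    exact Function.iterate_succ_apply' f k x
  have hlim' : IsOmegaLimit (f v) := by
    by_contra h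
    have h0 := hladder v hlim 0
    rw [ladder_of_not_isOmegaLimit h] at h0
    exact (hlim.ladder_lt 0).ne (hf.injective h0)
  have hfix : f v = v := by
    refine le_antisymm (hlim'.isLUB_ladder.2 ?_) hf.le_apply
    rintro _ ⟨n, rfl⟩
    exact hladder v hlim n ▸ (map_lt _ (hlim.ladder_lt n)).le
  have hxv : x < v := hx.trans_le (hv.1 ⟨1, rfl⟩)
  obtain ⟨_, ⟨n, rfl⟩, hn⟩ := (lt_isLUB_iff hlim.isLUB_ladder).1 hxv
  have hrung : Function.IsFixedPt f (ladder v n) := by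
    rw [Function.IsFixedPt, hladder v hlim n, hfix]
  refine (hlim.ladder_lt n).not_ge (hv.2 ?_)
  rintro _ ⟨k, rfl⟩
  exact (hf.monotone.iterate k hn.le).trans_eq (hrung.iterate k)

end Ladders

section Patterns

/-- The equivalence relation whose only nontrivial class is `S`. -/
def collapse {I : Type*} (S : Set I) : Setoid I where
  r a b := a = b ∨ a ∈ S ∧ b ∈ S
  iseqv :=
    { refl := fun _ => Or.inl rfl
      symm := by rintro a b (rfl | ⟨ha, hb⟩) <;> tauto
      trans := by rintro a b c (rfl | ⟨ha, hb⟩) (rfl | ⟨hb', hc⟩) <;> tauto }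

theorem map_mem_of_collapse_le {I J : Type*} {S : Set I} {S' : Set J} {F : I → J}
    (hF : Function.Injective F) (hle : collapse S ≤ (collapse S').comap F) {a b : I}
    (hab : a ≠ b) (ha : a ∈ S) (hb : b ∈ S) : F a ∈ S' := by
  rcases hle (Or.inr ⟨ha, hb⟩ : collapse S a b) with h | h
  · exact absurd (hF h) hab
  · exact h.1

variable {V : Type*} [LinearOrder V]

/-- Countably many equivalence relations on `V × V` which encode the two projections, the diagonal,
the order, the element `q`, and all ladders. -/
noncomputable def pattern (q : V) : ℕ → Setoid (V × V)
  | 0 => Setoid.ker Prod.fst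
  | 1 => Setoid.ker Prod.snd
  | 2 => collapse {p | p.1 = p.2}
  | 3 => collapse {p | p.1 ≤ p.2}
  | 4 => collapse {p | p.1 = q}
  | n + 5 => collapse {p | p.1 = p.2 ∨ p.1 = ladder p.2 n}

variable {q q' : V} {F : V × V → V × V}

theorem exists_strictMono_of_pattern_le [Nontrivial V] (hF : Function.Injective F)
    (h : ∀ n, pattern q n ≤ (pattern q' n).comap F) :
    ∃ a : V → V, StrictMono a ∧ ∀ x y, F (x, y) = (a x, a y) := by
  have hdiag (x : V) : (F (x, x)).1 = (F (x, x)).2 := by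
    obtain ⟨y, hy⟩ := exists_ne x
    exact map_mem_of_collapse_le hF (h 2) (b := (y, y)) (by simpa using hy.symm) rfl rfl
  have hprod (x y : V) : F (x, y) = ((F (x, x)).1, (F (y, y)).1) := by
    have hfst : (F (x, y)).1 = (F (x, x)).1 := h 0 (rfl : (x, y).1 = (x, x).1)
    have hsnd : (F (x, y)).2 = (F (y, y)).2 := h 1 (rfl : (x, y).2 = (y, y).2)
    exact Prod.ext hfst (hsnd.trans (hdiag y).symm)
  refine ⟨fun x => (F (x, x)).1, fun x y hxy => ?_, hprod⟩
  have hle := map_mem_of_collapse_le hF (h 3) (a := (x, y)) (b := (x, x))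
    (by simpa using hxy.ne') hxy.le le_rfl
  rw [hprod] at hle
  refine lt_of_le_of_ne hle fun heq => hxy.ne ?_
  have heq' : F (x, x) = F (y, y) := by
    rw [hprod x x, hprod y y]
    exact Prod.ext heq heq
  exact congrArg Prod.fst (hF heq')

theorem eq_of_pattern_le [WellFoundedLT V] [OrderTop V] [Nontrivial V]
    (hF : Function.Injective F) (h : ∀ n, pattern q n ≤ (pattern q' n).comap F) : q = q' := by
  obtain ⟨a, ha, hprod⟩ := exists_strictMono_of_pattern_le hF h
  have hid : a = id := by
    refine eq_id_of_map_ladder ha fun v hv n => ?_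
    have hlt := hv.ladder_lt n
    have hmem := map_mem_of_collapse_le hF (h (n + 5)) (a := (ladder v n, v)) (b := (v, v))
      (by simpa using hlt.ne) (Or.inr rfl) (Or.inl rfl)
    rw [hprod] at hmem
    exact hmem.resolve_left (ha hlt).ne
  obtain ⟨y, hy⟩ := exists_ne q
  have hmem := map_mem_of_collapse_le hF (h 4) (a := (q, q)) (b := (q, y))
    (by simpa using hy.symm) rfl rfl
  rw [hprod, hid] at hmem
  exact hmem

end Patterns

section Diagonalization

theorem exists_forall_of_wellFounded {T β : Type*} {r : T → T → Prop} (hr : WellFounded r)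
    {P : ∀ t, ({s // r s t} → β) → β → Prop} (h : ∀ t c, ∃ b, P t c b) :
    ∃ c : T → β, ∀ t, P t (fun s => c s) (c t) := by
  choose g hg using h
  refine ⟨hr.fix fun t c => g t fun s => c s s.2, fun t => ?_⟩
  conv => arg 3; rw [hr.fix_eq]
  exact hg t _

variable {Y T : Type u} {κ : Cardinal.{u}}

/-- A relation is `κ`-unavoidable if it relates two distinct points, even after fewer than `κ`
points have been forbidden on each side. -/
def IsUnavoidable (κ : Cardinal.{u}) (R : Y → Y → Prop) : Prop :=
  ∀ A B : Set Y, #A < κ → #B < κ → ∃ x z, R x z ∧ x ∉ A ∧ z ∉ B ∧ x ≠ z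

theorem exists_disjoint_ranges_of_isUnavoidable (hκ : ℵ₀ ≤ κ) (hT : #T ≤ κ) {D : Set Y}
    (hD : #D < κ) {R : T → Y → Y → Prop} (hR : ∀ t, IsUnavoidable κ (R t)) :
    ∃ x z : T → Y, Function.Injective x ∧ Disjoint (D ∪ range x) (range z) ∧
      ∀ t, R t (x t) (z t) := by
  obtain ⟨r, _, hr⟩ := exists_ord_eq T
  have union_lt {A B : Set Y} (hA : #A < κ) (hB : #B < κ) : #(A ∪ B : Set Y) < κ :=
    (mk_union_le A B).trans_lt (add_lt_of_lt hκ hA hB)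
  have range_lt (t : T) (c : {s // r s t} → Y) : #(range c) < κ :=
    mk_range_le.trans_lt <| lt_of_lt_of_le (card_typein_lt t hr) hT
  obtain ⟨c, hc⟩ := exists_forall_of_wellFounded (IsWellFounded.wf (r := r))
    (P := fun t (c : {s // r s t} → Y × Y) b => R t b.1 b.2 ∧
      b.1 ∉ range (fun s => (c s).1) ∪ range (fun s => (c s).2) ∧
      b.2 ∉ D ∪ range (fun s => (c s).1) ∧ b.1 ≠ b.2) fun t c => by
    obtain ⟨x, z, h⟩ := hR t _ _ (union_lt (range_lt t fun s => (c s).1)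
      (range_lt t fun s => (c s).2)) (union_lt hD (range_lt t fun s => (c s).1))
    exact ⟨(x, z), h⟩
  choose hRc hx hz hne using hc
  refine ⟨fun t => (c t).1, fun t => (c t).2, fun s t hst => ?_, ?_, hRc⟩
  · rcases trichotomous_of r s t with h | h | h
    · exact absurd (Or.inl ⟨⟨s, h⟩, hst⟩) (hx t)
    · exact h
    · exact absurd (Or.inl ⟨⟨t, h⟩, hst.symm⟩) (hx s)
  · refine disjoint_left.2 ?_
    rintro y (hy | ⟨s, rfl⟩) ⟨t, hst⟩
    · subst hst
      exact hz t (Or.inl hy)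
    · rcases trichotomous_of r s t with h | rfl | h
      · exact hz t (Or.inr ⟨⟨s, h⟩, hst.symm⟩)
      · exact hne s hst.symm
      · exact hx s (Or.inr ⟨⟨t, h⟩, hst⟩)

end Diagonalization

section RigidSets

/-- The property of a space `K` that drives all constructions below: its only continuous injective
self-map is the identity, and deleting a countable set leaves it connected and dense. -/
structure StronglyRigid (K : Type*) [TopologicalSpace K] : Prop where
  eq_id : ∀ f : K → K, Continuous f → Function.Injective f → f = id
  isPreconnected_compl : ∀ C : Set K, C.Countable → IsPreconnected Cᶜ
  dense_compl : ∀ C : Set K, C.Countable → Dense Cᶜ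

theorem StronglyRigid.preconnectedSpace {K : Type*} [TopologicalSpace K] (hK : StronglyRigid K) :
    PreconnectedSpace K :=
  ⟨by simpa only [compl_empty] using hK.isPreconnected_compl ∅ countable_empty⟩

variable {Y : Type u}

theorem exists_mem_notMem_of_mk_lt {A S : Set Y} (hS : 𝔠 ≤ #S) (hA : #A < 𝔠) :
    ∃ x ∈ S, x ∉ A :=
  sdiff_nonempty_of_mk_lt_mk (hA.trans_le hS)

theorem mk_lt_continuum_of_countable {C : Set Y} (hC : C.Countable) : #C < 𝔠 :=
  hC.le_aleph0.trans_lt aleph0_lt_continuum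

variable [TopologicalSpace Y] {K : Set Y}

/-- A strong form of one half of the Bernstein property: `K` meets every uncountable closed set in
at least continuum many points. -/
def MeetsUncountableClosed (K : Set Y) : Prop :=
  ∀ F : Set Y, IsClosed F → ¬ F.Countable → 𝔠 ≤ #(K ∩ F : Set Y)

namespace MeetsUncountableClosed

theorem mk_inter_isOpen [RegularSpace Y] (hK : MeetsUncountableClosed K)
    (hdense : ∀ C : Set Y, C.Countable → Dense Cᶜ) {O : Set Y} (hO : IsOpen O)
    (hne : O.Nonempty) : 𝔠 ≤ #(K ∩ O : Set Y) := by
  obtain ⟨p, hp⟩ := hne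
  obtain ⟨F, hFp, hF, hFO⟩ := exists_mem_nhds_isClosed_subset (hO.mem_nhds hp)
  have hunc : ¬ F.Countable := fun hc => by
    obtain ⟨y, hy, hy'⟩ := (hdense F hc).inter_nhds_nonempty hFp
    exact hy hy'
  exact (hK F hF hunc).trans (mk_le_mk_of_subset (inter_subset_inter_right K hFO))

theorem dense_compl [RegularSpace Y] (hK : MeetsUncountableClosed K)
    (hdense : ∀ C : Set Y, C.Countable → Dense Cᶜ) {C : Set K} (hC : C.Countable) :
    Dense Cᶜ := by
  refine dense_iff_inter_open.2 ?_
  rintro _ ⟨O, hO, rfl⟩ ⟨p, hp⟩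
  obtain ⟨x, ⟨hxK, hxO⟩, hxC⟩ := exists_mem_notMem_of_mk_lt
    (hK.mk_inter_isOpen hdense hO ⟨p, hp⟩) (mk_lt_continuum_of_countable (hC.image Subtype.val))
  exact ⟨⟨x, hxK⟩, hxO, fun h => hxC (mem_image_of_mem _ h)⟩

theorem isPreconnected_diff [RegularSpace Y] (hK : MeetsUncountableClosed K)
    (hdense : ∀ C : Set Y, C.Countable → Dense Cᶜ)
    (hconn : ∀ C : Set Y, C.Countable → IsPreconnected Cᶜ) {C : Set Y} (hC : C.Countable) :
    IsPreconnected (K \ C) := by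
  rintro U V hU hV hUV ⟨u, -, huU⟩ ⟨v, -, hvV⟩
  have hCc := mk_lt_continuum_of_countable hC
  suffices h : (U ∩ V).Nonempty by
    obtain ⟨x, ⟨hxK, hx⟩, hxC⟩ :=
      exists_mem_notMem_of_mk_lt (hK.mk_inter_isOpen hdense (hU.inter hV) h) hCc
    exact ⟨x, ⟨hxK, hxC⟩, hx⟩
  have hc : ((U ∪ V)ᶜ).Countable := by
    by_contra hc
    obtain ⟨x, ⟨hxK, hx⟩, hxC⟩ :=
      exists_mem_notMem_of_mk_lt (hK _ (hU.union hV).isClosed_compl hc) hCc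
    exact hx (hUV ⟨hxK, hxC⟩)
  have hUVconn := hconn _ hc
  rw [compl_compl] at hUVconn
  obtain ⟨x, -, hx⟩ := hUVconn U V hU hV subset_rfl ⟨u, Or.inl huU, huU⟩ ⟨v, Or.inr hvV, hvV⟩
  exact ⟨x, hx⟩

theorem isPreconnected_compl [RegularSpace Y] (hK : MeetsUncountableClosed K)
    (hdense : ∀ C : Set Y, C.Countable → Dense Cᶜ)
    (hconn : ∀ C : Set Y, C.Countable → IsPreconnected Cᶜ) {C : Set K} (hC : C.Countable) :
    IsPreconnected Cᶜ := by
  rw [← IsInducing.subtypeVal.isPreconnected_image, Set.image_val_compl]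
  exact hK.isPreconnected_diff hdense hconn (hC.image _)

end MeetsUncountableClosed

section Tasks

variable {D : Set Y}

/-- `g : D → Y` has the limit `z` at the point `x` of `Y`. -/
def HasLimitAt (g : D → Y) (x z : Y) : Prop :=
  Tendsto g (comap Subtype.val (𝓝 x)) (𝓝 z)

theorem HasLimitAt.unique [T2Space Y] (hD : Dense D) {g : D → Y} {x z z' : Y}
    (h : HasLimitAt g x z) (h' : HasLimitAt g x z') : z = z' :=
  haveI : (comap ((↑) : D → Y) (𝓝 x)).NeBot := mem_closure_iff_comap_neBot.1 (hD x)
  tendsto_nhds_unique h h'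

theorem hasLimitAt_restrict (hDK : D ⊆ K) {f : K → K} (hf : Continuous f) (x : K) :
    HasLimitAt (fun d => (f (inclusion hDK d) : Y)) x (f x) := by
  have h : Tendsto (inclusion hDK) (comap Subtype.val (𝓝 (x : Y))) (𝓝 x) :=
    tendsto_subtype_rng.2 tendsto_comap
  exact ((continuous_subtype_val.comp hf).tendsto x).comp h

theorem isUnavoidable_hasLimitAt [T2Space Y]
    (hopen : ∀ O : Set Y, IsOpen O → O.Nonempty → 𝔠 ≤ #(K ∩ O : Set Y)) (hDK : D ⊆ K)
    {f : K → K} (hf : Continuous f) (hinj : Function.Injective f) (hne : f ≠ id) :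
    IsUnavoidable 𝔠 (HasLimitAt fun d => (f (inclusion hDK d) : Y)) := by
  intro A B hA hB
  obtain ⟨O, hO, hOeq⟩ := isOpen_induced_iff.1 (isOpen_ne_fun hf continuous_id)
  obtain ⟨p, hp⟩ := Function.ne_iff.1 hne
  have hpO : (p : Y) ∈ O := hOeq.symm.subset hp
  have hpre : #(Subtype.val '' ((fun x => (f x : Y)) ⁻¹' B)) < 𝔠 :=
    mk_image_le.trans_lt <|
      (mk_preimage_of_injective _ _ (Subtype.val_injective.comp hinj)).trans_lt hB
  obtain ⟨x, ⟨hxK, hxO⟩, hx⟩ := exists_mem_notMem_of_mk_lt (hopen O hO ⟨p, hpO⟩)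
    ((mk_union_le A _).trans_lt (add_lt_of_lt aleph0_le_continuum hA hpre))
  lift x to K using hxK
  refine ⟨x, f x, hasLimitAt_restrict hDK hf x, fun h => hx (Or.inl h),
    fun h => hx (Or.inr (mem_image_of_mem _ h)), fun h => ?_⟩
  exact hOeq.subset hxO (Subtype.ext h.symm)

theorem continuum_le_mk_of_isClosed [PolishSpace Y] {F : Set Y} (hF : IsClosed F)
    (hunc : ¬ F.Countable) : 𝔠 ≤ #F := by
  obtain ⟨f, hf, -, hinj⟩ := hF.exists_nat_bool_injection_of_not_countable hunc
  have := mk_le_of_injective (α := ULift (ℕ → Bool)) (β := F)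
    (f := fun x => ⟨f x.down, hf (mem_range_self _)⟩)
    fun a b h => ULift.ext _ _ (hinj (congrArg Subtype.val h))
  simpa using this

theorem isUnavoidable_mem [PolishSpace Y] {F : Set Y} (hF : IsClosed F) (hunc : ¬ F.Countable) :
    IsUnavoidable 𝔠 fun x _ => x ∈ F := by
  intro A B hA hB
  have hFc := continuum_le_mk_of_isClosed hF hunc
  obtain ⟨x, hxF, hxA⟩ := exists_mem_notMem_of_mk_lt hFc hA
  obtain ⟨z, -, hz⟩ := exists_mem_notMem_of_mk_lt hFc (A := B ∪ {x}) <|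
    (mk_union_le _ _).trans_lt <|
      add_lt_of_lt aleph0_le_continuum hB (mk_lt_continuum_of_countable (countable_singleton x))
  exact ⟨x, z, hxF, hxA, fun h => hz (Or.inl h), fun h => hz (Or.inr h.symm)⟩

end Tasks

variable (Y) in
theorem mk_isClosed_le_continuum [SecondCountableTopology Y] : #{F : Set Y // IsClosed F} ≤ 𝔠 := by
  have hbasis := TopologicalSpace.isBasis_countableBasis Y
  have hcount : #(TopologicalSpace.countableBasis Y) ≤ ℵ₀ :=
    (TopologicalSpace.countable_countableBasis Y).le_aleph0
  have hinj : Function.Injective fun F : {F : Set Y // IsClosed F} =>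
      {B : TopologicalSpace.countableBasis Y | (B.1 ∩ F.1).Nonempty} := fun F F' h => by
    have hmem (B) (hB : B ∈ TopologicalSpace.countableBasis Y) :
        (B ∩ F.1).Nonempty ↔ (B ∩ F'.1).Nonempty := Set.ext_iff.1 h ⟨B, hB⟩
    ext x
    rw [← F.2.closure_eq, ← F'.2.closure_eq, hbasis.mem_closure_iff, hbasis.mem_closure_iff]
    exact forall₃_congr fun B hB _ => hmem B hB
  calc #{F : Set Y // IsClosed F} ≤ 2 ^ #(TopologicalSpace.countableBasis Y) :=
        (mk_le_of_injective hinj).trans_eq mk_set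
    _ ≤ 2 ^ ℵ₀ := power_le_power_left two_ne_zero hcount
    _ = 𝔠 := two_power_aleph0

variable (Y) in
theorem mk_le_continuum [SecondCountableTopology Y] [T1Space Y] : #Y ≤ 𝔠 :=
  (mk_le_of_injective (f := fun y : Y => (⟨{y}, isClosed_singleton⟩ : {F : Set Y // IsClosed F}))
    fun _ _ h => singleton_injective (congrArg Subtype.val h)).trans (mk_isClosed_le_continuum Y)

theorem exists_meetsUncountableClosed_avoiding [PolishSpace Y] {N : Set Y} (hN : N.Countable) :
    ∃ K : Set Y, N ⊆ K ∧ MeetsUncountableClosed K ∧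
      ∀ g : N → Y, IsUnavoidable 𝔠 (HasLimitAt g) → ∃ x ∈ K, ∃ z ∉ K, HasLimitAt g x z := by
  let ClosedTask := {F : {F : Set Y // IsClosed F} // ¬ F.1.Countable} × Y
  let MapTask := {g : N → Y // IsUnavoidable 𝔠 (HasLimitAt g)}
  have hT : #(ClosedTask ⊕ MapTask) ≤ 𝔠 := by
    have hY := mk_le_continuum Y
    have hclosed : #ClosedTask ≤ 𝔠 := by
      rw [mk_prod, lift_id, lift_id]
      exact (mul_le_mul' ((mk_subtype_le _).trans (mk_isClosed_le_continuum Y)) hY).trans_eq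
        continuum_mul_self
    have hmap : #MapTask ≤ 𝔠 := by
      refine (mk_subtype_le _).trans ?_
      rw [← power_def, ← continuum_power_aleph0]
      exact (power_le_power_right hY).trans
        (power_le_power_left continuum_ne_zero hN.le_aleph0)
    rw [mk_sum, lift_id, lift_id]
    exact (add_le_add hclosed hmap).trans_eq continuum_add_self
  obtain ⟨x, z, hx, hxz, hR⟩ := exists_disjoint_ranges_of_isUnavoidable aleph0_le_continuum hT
    (mk_lt_continuum_of_countable hN)
    (R := Sum.elim (fun t x _ => x ∈ t.1.1.1) fun g => HasLimitAt g.1)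
    (by rintro (t | g); exacts [isUnavoidable_mem t.1.1.2 t.1.2, g.2])
  refine ⟨N ∪ range x, subset_union_left, fun F hF hunc => ?_, fun g hg =>
    ⟨x (Sum.inr ⟨g, hg⟩), Or.inr (mem_range_self _), z (Sum.inr ⟨g, hg⟩),
      disjoint_right.1 hxz (mem_range_self _), hR (Sum.inr ⟨g, hg⟩)⟩⟩
  let task (y : Y) : ClosedTask ⊕ MapTask := Sum.inl (⟨⟨F, hF⟩, hunc⟩, y)
  have hYF : 𝔠 ≤ #Y := (continuum_le_mk_of_isClosed hF hunc).trans (mk_set_le F)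
  refine hYF.trans <| mk_le_of_injective
    (f := fun y => ⟨x (task y), Or.inr (mem_range_self _), hR (task y)⟩) fun y y' h => ?_
  exact (Prod.ext_iff.1 (Sum.inl_injective (hx (congrArg Subtype.val h)))).2

/-- An injective `f : K → K` other than the identity is determined by its restriction `g` to a
countable dense set. The set `K` contains a point at which the only possible value of `f` lies
outside of `K`. -/
theorem exists_stronglyRigid [PolishSpace Y] (hdense : ∀ C : Set Y, C.Countable → Dense Cᶜ)
    (hconn : ∀ C : Set Y, C.Countable → IsPreconnected Cᶜ) {D : Set Y} (hD : D.Countable) :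
    ∃ K : Set Y, D ⊆ K ∧ StronglyRigid K ∧ MeetsUncountableClosed K := by
  obtain ⟨E, hE, hEd⟩ := TopologicalSpace.exists_countable_dense Y
  obtain ⟨K, hNK, hK, havoid⟩ := exists_meetsUncountableClosed_avoiding (hD.union hE)
  refine ⟨K, subset_union_left.trans hNK, ⟨fun f hf hinj => ?_,
    fun _ => hK.isPreconnected_compl hdense hconn, fun _ => hK.dense_compl hdense⟩, hK⟩
  by_contra hne
  obtain ⟨x, hx, z, hz, hlim⟩ := havoid _ <| isUnavoidable_hasLimitAt
    (fun _ hO => hK.mk_inter_isOpen hdense hO) hNK hf hinj hne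
  have hzf : z = f ⟨x, hx⟩ := hlim.unique (hEd.mono subset_union_right)
    (hasLimitAt_restrict hNK hf ⟨x, hx⟩)
  exact hz (hzf ▸ (f ⟨x, hx⟩).2)

end RigidSets

section GraphUnions

variable {K W W' I I' : Type*} [TopologicalSpace K] [TopologicalSpace W] [TopologicalSpace W']
  {g : I → C(K, W)} {g' : I' → C(K, W')}

/-- The union of the graphs of a family of continuous maps, as a subset of the product. -/
def GraphUnion (g : I → C(K, W)) : Set (K × W) :=
  {p | ∃ i, g i p.1 = p.2}

namespace GraphUnion

/-- The graph of `g i` as a parametrized subset, called the `i`-th leaf, of the union. -/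
def leaf (g : I → C(K, W)) (i : I) (x : K) : GraphUnion g :=
  ⟨(x, g i x), i, rfl⟩

theorem exists_leaf_eq (y : GraphUnion g) : ∃ i, leaf g i y.1.1 = y :=
  y.2.imp fun _ hi => Subtype.ext (Prod.ext rfl hi)

theorem continuous_leaf (i : I) : Continuous (leaf g i) :=
  (continuous_id.prodMk (g i).continuous).subtype_mk _

theorem leaf_injective (i : I) : Function.Injective (leaf g i) :=
  fun _ _ h => congrArg (fun y => y.1.1) h

theorem leaf_eq_leaf_iff {i j : I} {x y : K} : leaf g i x = leaf g j y ↔ x = y ∧ g i x = g j y :=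
  Subtype.ext_iff.trans Prod.ext_iff

theorem iUnion_range_leaf : ⋃ i, range (leaf g i) = Set.univ :=
  eq_univ_of_forall fun y => mem_iUnion.2 <| (exists_leaf_eq y).imp fun _ h => ⟨y.1.1, h⟩

theorem leaf_index_injective (hg : Function.Injective g) : Function.Injective (leaf g) :=
  fun _ _ h => hg <| ContinuousMap.ext fun x => (leaf_eq_leaf_iff.1 (congrFun h x)).2

theorem preconnectedSpace [PreconnectedSpace K]
    (h : ∀ i j, Relation.ReflTransGen (fun i j => ∃ x, g i x = g j x) i j) :
    PreconnectedSpace (GraphUnion g) := by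
  refine ⟨iUnion_range_leaf (g := g) ▸ IsPreconnected.iUnion_of_reflTransGen
    (fun i => isPreconnected_range (continuous_leaf i))
    fun i j => Relation.ReflTransGen.mono ?_ i j (h i j)⟩
  rintro i j ⟨x, hx⟩
  exact ⟨leaf g i x, ⟨x, rfl⟩, x, leaf_eq_leaf_iff.2 ⟨rfl, hx.symm⟩⟩

theorem mk_le {K : Type v} {W I : Type w} [TopologicalSpace K] [TopologicalSpace W]
    (g : I → C(K, W)) : #(GraphUnion g) ≤ #(K × I) :=
  mk_le_of_surjective (f := fun p : K × I => leaf g p.2 p.1) fun y =>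
    (exists_leaf_eq y).elim fun i hi => ⟨(y.1.1, i), hi⟩

theorem lift_mk_le_mk {K : Type v} {W I : Type w} [TopologicalSpace K] [TopologicalSpace W]
    {g : I → C(K, W)} {x : K} (hx : Function.Injective fun i => g i x) :
    lift.{v} #I ≤ #(GraphUnion g) := by
  rw [← mk_uLift]
  exact mk_le_of_injective (f := fun i : ULift.{v} I => leaf g i.down x)
    fun i j h => ULift.ext _ _ (hx (leaf_eq_leaf_iff.1 h).2)

theorem range_eq_compl_range_leaf {f : GraphUnion g → GraphUnion g'} {F : I → I'}
    (hf : ∀ i x, f (leaf g i x) = leaf g' (F i) x) (hdisj : ∀ i j x, g' i x = g' j x → i = j)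
    {i₀ : I'} (hF : range F = {i₀}ᶜ) : range f = (range (leaf g' i₀))ᶜ := by
  ext p
  refine ⟨?_, fun hp => ?_⟩
  · rintro ⟨q, rfl⟩ ⟨y, hy⟩
    obtain ⟨i, hi⟩ := exists_leaf_eq q
    rw [← hi, hf] at hy
    obtain ⟨rfl, h⟩ := leaf_eq_leaf_iff.1 hy
    exact hF.subset (mem_range_self i) (hdisj _ _ _ h).symm
  · obtain ⟨i', hi'⟩ := exists_leaf_eq p
    have hne : i' ≠ i₀ := fun h => hp ⟨p.1.1, h ▸ hi'⟩
    obtain ⟨i, rfl⟩ : i' ∈ range F := hF.symm.subset hne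
    exact ⟨leaf g i p.1.1, (hf i _).trans hi'⟩

end GraphUnion

open GraphUnion

/-- Every continuous injective map from `K` to the union of the graphs parametrizes one of the
graphs in the canonical way. -/
def HasOnlyLeaves (g : I → C(K, W)) : Prop :=
  ∀ f : K → GraphUnion g, Continuous f → Function.Injective f → ∃ i, f = leaf g i

/-- If `f` stays in one leaf, then its base component is injective, hence the identity. -/
theorem StronglyRigid.hasOnlyLeaves (hK : StronglyRigid K)
    (h : ∀ f : K → GraphUnion g, Continuous f → Function.Injective f →
      ∃ i, ∀ x, f x = leaf g i (f x).1.1) : HasOnlyLeaves g := by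
  intro f hf hinj
  obtain ⟨i, hi⟩ := h f hf hinj
  have hbase : (fun x => (f x).1.1) = id := by
    refine hK.eq_id _ (continuous_fst.comp (continuous_subtype_val.comp hf)) fun x y hxy => hinj ?_
    rw [hi x, hi y]
    exact congrArg (leaf g i) hxy
  exact ⟨i, funext fun x => (hi x).trans (congrArg (leaf g i) (congrFun hbase x))⟩

theorem HasOnlyLeaves.exists_index_map (hg' : HasOnlyLeaves g') (hg : Function.Injective g)
    {f : GraphUnion g → GraphUnion g'} (hf : Continuous f) (hinj : Function.Injective f) :
    ∃ F : I → I', Function.Injective F ∧ ∀ i x, f (leaf g i x) = leaf g' (F i) x := by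
  choose F hF using fun i =>
    hg' (f ∘ leaf g i) (hf.comp (continuous_leaf i)) (hinj.comp (leaf_injective i))
  refine ⟨F, fun i j hij => leaf_index_injective hg (funext fun x => hinj ?_),
    fun i => congrFun (hF i)⟩
  exact congrFun ((hF i).trans ((congrArg (leaf g') hij).trans (hF j).symm)) x

theorem HasOnlyLeaves.exists_index_equiv (hleaf : HasOnlyLeaves g) (hleaf' : HasOnlyLeaves g')
    (hg : Function.Injective g) (hg' : Function.Injective g')
    (f : GraphUnion g ≃ₜ GraphUnion g') :
    ∃ e : I ≃ I', ∀ i x, f (leaf g i x) = leaf g' (e i) x := by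
  obtain ⟨F, -, hF⟩ := hleaf'.exists_index_map hg f.continuous f.injective
  obtain ⟨G, -, hG⟩ := hleaf.exists_index_map hg' f.symm.continuous f.symm.injective
  have hGF (i) : G (F i) = i := leaf_index_injective hg <| funext fun x => by
    rw [← hG, ← hF, f.symm_apply_apply]
  have hFG (i) : F (G i) = i := leaf_index_injective hg' <| funext fun x => by
    rw [← hF, ← hG, f.apply_symm_apply]
  exact ⟨⟨F, G, hGF, hFG⟩, hF⟩

/-- Two leaves that meet would be mapped to different leaves that meet. -/
theorem HasOnlyLeaves.noInjCont (hg' : HasOnlyLeaves g') (hg : Function.Injective g)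
    {i j : I} (hij : i ≠ j) {x : K} (hx : g i x = g j x)
    (hdisj : ∀ i j x, g' i x = g' j x → i = j) : NoInjCont (GraphUnion g) (GraphUnion g') := by
  rintro ⟨f, hf, hinj⟩
  obtain ⟨F, hF, hleaf⟩ := hg'.exists_index_map hg hf hinj
  refine hij (hF (hdisj _ _ x (leaf_eq_leaf_iff.1 ?_).2))
  rw [← hleaf, ← hleaf, leaf_eq_leaf_iff.2 ⟨rfl, hx⟩]

end GraphUnions

section UnitVectors

variable {C : Type*}

open Classical in
/-- The characteristic function of `{c}` as an element of `ℓ^∞(C)`. -/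
noncomputable def unitVector (c : C) : lp (fun _ : C => ℝ) ⊤ :=
  lp.single ⊤ c 1

theorem unitVector_apply_self (c : C) : unitVector c c = 1 := by
  classical exact lp.single_apply_self ⊤ c 1

theorem unitVector_apply_of_ne {c d : C} (h : d ≠ c) : unitVector c d = 0 := by
  classical exact lp.single_apply_ne ⊤ c 1 h

theorem continuous_eval (c : C) : Continuous fun z : lp (fun _ : C => ℝ) ⊤ => z c :=
  (lp.evalCLM ℝ (fun _ : C => ℝ) ⊤ c).continuous

theorem eq_of_smul_unitVector_eq {a : ℝ} (ha : a ≠ 0) {c d : C}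
    (h : a • unitVector c = a • unitVector d) : c = d := by
  by_contra hne
  have hc : (a • unitVector c) c = (a • unitVector d) c := by rw [h]
  simp only [lp.coeFn_smul, Pi.smul_apply, unitVector_apply_self, unitVector_apply_of_ne hne,
    smul_eq_mul, mul_one, mul_zero] at hc
  exact ha hc

variable (C) in
theorem discreteTopology_range_unitVector : DiscreteTopology (range (unitVector (C := C))) := by
  rw [discreteTopology_iff_isOpen_singleton]
  rintro ⟨_, c, rfl⟩
  have hopen : IsOpen {z : range (unitVector (C := C)) | z.1 c ≠ 0} :=
    isOpen_ne_fun ((continuous_eval c).comp continuous_subtype_val) continuous_const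
  convert hopen using 1
  ext ⟨_, d, rfl⟩
  refine ⟨fun h => ?_, fun h => ?_⟩
  · have hdc : unitVector d = unitVector c := congrArg Subtype.val h
    change unitVector d c ≠ 0
    rw [hdc, unitVector_apply_self]
    exact one_ne_zero
  · by_contra hne
    exact h (unitVector_apply_of_ne fun hcd => hne (Subtype.ext (congrArg unitVector hcd.symm)))

end UnitVectors

theorem countable_of_discreteTopology_image {X Z : Type*} [TopologicalSpace X]
    [SecondCountableTopology X] [TopologicalSpace Z] {A : Set X} {D : Set Z} [DiscreteTopology D]
    {f : X → Z} (hf : Continuous f) (hinj : InjOn f A) (hmaps : MapsTo f A D) : A.Countable := by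
  have : DiscreteTopology A := .of_continuous_injective (hf.continuousOn.mapsToRestrict hmaps)
    ((MapsTo.restrict_inj hmaps).2 hinj)
  have : Countable A := TopologicalSpace.separableSpace_iff_countable.1 inferInstance
  exact A.to_countable

theorem eq_of_isPreconnected_of_countable_image {X Z : Type*} [TopologicalSpace X] [MetricSpace Z]
    {S : Set X} (hS : IsPreconnected S) {φ : X → Z} (hφ : ContinuousOn φ S)
    (hc : (φ '' S).Countable) {x y : X} (hx : x ∈ S) (hy : y ∈ S) : φ x = φ y :=
  hc.isTotallyDisconnected _ subset_rfl (hS.image φ hφ) (mem_image_of_mem φ hx)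
    (mem_image_of_mem φ hy)

/-- A sequence of points of `K` at which copies of `K` are going to be glued together, with
auxiliary functions: `height` vanishes exactly at these points, and the functions `bump n` separate
them. -/
structure GluingData (K : Type*) [TopologicalSpace K] where
  point : ℕ → K
  height : C(K, ℝ)
  bump : ℕ → C(K, ℝ)
  height_eq_zero_iff : ∀ x, height x = 0 ↔ x ∈ range point
  bump_point_self : ∀ n, bump n (point n) = 1
  bump_point_of_ne : ∀ {m n}, m ≠ n → bump m (point n) = 0

namespace GluingData

variable {K : Type*} [TopologicalSpace K]

theorem nonempty_of_map_eq_natCast [TopologicalSpace.MetrizableSpace K] (φ : C(K, ℝ)) {k : ℕ → K}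
    (hk : ∀ n, φ (k n) = n) : Nonempty (GluingData K) := by
  let := TopologicalSpace.metrizableSpaceMetric K
  have hcomp : φ ∘ k = ((↑) : ℕ → ℝ) := funext hk
  have hclosed : IsClosed (range k) := by
    refine (isProperMap_of_comp_of_t2 continuous_of_discreteTopology φ.continuous ?_).isClosed_range
    rw [hcomp]
    exact Nat.isClosedEmbedding_coe_real.isProperMap
  exact ⟨{
    point := k
    height := ⟨fun x => Metric.infDist x (range k), Metric.continuous_infDist_pt _⟩
    bump := fun n => ⟨fun x => max 0 (1 - |φ x - n|), by fun_prop⟩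
    height_eq_zero_iff := fun x => (hclosed.mem_iff_infDist_zero (range_nonempty k)).symm
    bump_point_self := fun n => by simp [hk]
    bump_point_of_ne := fun {m n} hmn => by
      have h1 : (1 : ℝ) ≤ |(n : ℝ) - m| := by
        exact_mod_cast Int.one_le_abs (sub_ne_zero.2 (Nat.cast_injective.ne hmn.symm))
      simpa [hk] using h1 }⟩

variable {I I' : Type*} (G : GluingData K) (s : ℕ → Setoid I) (s' : ℕ → Setoid I')

/-- The maps whose graphs over `K` are pairwise disjoint, except that at the `n`-th gluing point the
graphs with `s n`-equivalent indices are glued together. -/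
noncomputable def leafMap (b : I) :
    C(K, lp (fun _ : I => ℝ) ⊤ × ∀ n, lp (fun _ : Quotient (s n) => ℝ) ⊤) where
  toFun x := (G.height x • unitVector b, fun n => G.bump n x • unitVector ⟦b⟧)

/-- The space obtained from the disjoint union of copies of `K` indexed by `I` by gluing, for each
`n`, the `n`-th gluing points of copies with `s n`-equivalent indices. The topology is not the
quotient topology but a metrizable one, inherited from `ℓ^∞` spaces. -/
abbrev GluedSpace :=
  GraphUnion (G.leafMap s)

variable {G s s'}

theorem eq_of_leafMap_eq {x : K} (hx : G.height x ≠ 0) {b d : I}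
    (h : G.leafMap s b x = G.leafMap s d x) : b = d :=
  eq_of_smul_unitVector_eq hx (congrArg Prod.fst h)

theorem leafMap_point_eq_iff {n : ℕ} {b d : I} :
    G.leafMap s b (G.point n) = G.leafMap s d (G.point n) ↔ s n b d := by
  refine ⟨fun h => ?_, fun h => Prod.ext ?_ (funext fun m => ?_)⟩
  · refine Quotient.exact (eq_of_smul_unitVector_eq (a := G.bump n (G.point n)) ?_
      (congrFun (congrArg Prod.snd h) n))
    rw [G.bump_point_self]
    exact one_ne_zero
  · have h0 : G.height (G.point n) = 0 := (G.height_eq_zero_iff _).2 (mem_range_self n)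
    simp only [leafMap, ContinuousMap.coe_mk, h0, zero_smul]
  · rcases eq_or_ne m n with rfl | hm
    · exact congrArg (fun c => _ • unitVector c) (Quotient.sound h)
    · simp only [leafMap, ContinuousMap.coe_mk, G.bump_point_of_ne hm, zero_smul]

theorem exists_height_ne_zero (G : GluingData K) (hK : StronglyRigid K) : ∃ x, G.height x ≠ 0 := by
  have : Nonempty K := ⟨G.point 0⟩
  obtain ⟨x, hx⟩ := (hK.dense_compl _ (countable_range G.point)).nonempty
  exact ⟨x, mt (G.height_eq_zero_iff x).1 hx⟩

theorem leafMap_injective (hK : StronglyRigid K) : Function.Injective (G.leafMap s) := by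
  obtain ⟨x, hx⟩ := G.exists_height_ne_zero hK
  exact fun b d h => eq_of_leafMap_eq hx (DFunLike.congr_fun h x)

section OnlyLeaves

variable {f : K → G.GluedSpace s}

theorem countable_preimage_point [SecondCountableTopology K] (hf : Continuous f)
    (hinj : Function.Injective f) (n : ℕ) : {t | (f t).1.1 = G.point n}.Countable := by
  have hval (t) (ht : (f t).1.1 = G.point n) :
      ∃ b, f t = GraphUnion.leaf _ b (G.point n) ∧ (f t).1.2.2 n = unitVector ⟦b⟧ := by
    obtain ⟨b, hb⟩ := GraphUnion.exists_leaf_eq (f t)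
    rw [ht] at hb
    refine ⟨b, hb.symm, hb ▸ ?_⟩
    change G.bump n (G.point n) • unitVector ⟦b⟧ = unitVector ⟦b⟧
    rw [G.bump_point_self, one_smul]
  have := discreteTopology_range_unitVector (Quotient (s n))
  refine countable_of_discreteTopology_image (D := range unitVector)
    (f := fun t => (f t).1.2.2 n) (by fun_prop) (fun t ht t' ht' h => hinj ?_) fun t ht => ?_
  · obtain ⟨b, hb, hb'⟩ := hval t ht
    obtain ⟨d, hd, hd'⟩ := hval t' ht'
    rw [hb, hd, GraphUnion.leaf_eq_leaf_iff, leafMap_point_eq_iff]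
    refine ⟨rfl, Quotient.exact (eq_of_smul_unitVector_eq (one_ne_zero (α := ℝ)) ?_)⟩
    rw [← hb', ← hd']
    exact congrArg _ h
  · obtain ⟨b, -, hb⟩ := hval t ht
    exact ⟨_, hb.symm⟩

/-- The coordinate of `f t` at the index of one fixed leaf, divided by the height, is `1` on this
leaf and `0` elsewhere. -/
theorem eqOn_leaf_of_isPreconnected {S : Set K} (hS : IsPreconnected S)
    (hheight : ∀ t ∈ S, G.height (f t).1.1 ≠ 0) (hf : Continuous f) {t₀ : K} (ht₀ : t₀ ∈ S) :
    ∃ b, EqOn f (fun t => GraphUnion.leaf _ b (f t).1.1) S := by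
  choose β hβ using fun t => GraphUnion.exists_leaf_eq (f t)
  let ratio (t : K) : ℝ := (f t).1.2.1 (β t₀) / G.height (f t).1.1
  have hcoord (t) : (f t).1.2.1 = G.height (f t).1.1 • unitVector (β t) :=
    congrArg (fun y => y.1.2.1) (hβ t).symm
  have hratio (t) (ht : t ∈ S) : ratio t = unitVector (β t) (β t₀) := by
    simp only [ratio, hcoord t, lp.coeFn_smul, Pi.smul_apply, smul_eq_mul]
    exact mul_div_cancel_left₀ _ (hheight t ht)
  have hcont : ContinuousOn ratio S :=
    ((continuous_eval _).comp (by fun_prop : Continuous fun t => (f t).1.2.1)).continuousOn.div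
      (by fun_prop) hheight
  have hrange : ratio '' S ⊆ {0, 1} := by
    rintro _ ⟨t, ht, rfl⟩
    rw [hratio t ht]
    rcases eq_or_ne (β t₀) (β t) with h | h
    · exact Or.inr (h ▸ unitVector_apply_self _)
    · exact Or.inl (unitVector_apply_of_ne h)
  refine ⟨β t₀, fun t ht => ?_⟩
  have h1 : unitVector (β t) (β t₀) = 1 := by
    rw [← hratio t ht, ← unitVector_apply_self (β t₀), ← hratio t₀ ht₀]
    exact eq_of_isPreconnected_of_countable_image hS hcont
      ((toFinite _).countable.mono hrange) ht ht₀
  have h2 : β t₀ = β t := by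
    by_contra hne
    exact zero_ne_one ((unitVector_apply_of_ne hne).symm.trans h1)
  change f t = GraphUnion.leaf _ (β t₀) (f t).1.1
  rw [h2, hβ]

end OnlyLeaves

theorem hasOnlyLeaves_leafMap [T2Space K] [SecondCountableTopology K] (hK : StronglyRigid K) :
    HasOnlyLeaves (G.leafMap s) := by
  refine hK.hasOnlyLeaves fun f hf hinj => ?_
  let C : Set K := ⋃ n, {t | (f t).1.1 = G.point n}
  have hC : C.Countable := countable_iUnion (countable_preimage_point hf hinj)
  have hheight : ∀ t ∈ Cᶜ, G.height (f t).1.1 ≠ 0 := fun t ht h0 => by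
    obtain ⟨n, hn⟩ := (G.height_eq_zero_iff _).1 h0
    exact ht (mem_iUnion.2 ⟨n, hn.symm⟩)
  have : Nonempty K := ⟨G.point 0⟩
  obtain ⟨t₀, ht₀⟩ := (hK.dense_compl C hC).nonempty
  obtain ⟨b, hb⟩ := eqOn_leaf_of_isPreconnected (hK.isPreconnected_compl C hC) hheight hf ht₀
  exact ⟨b, congrFun <| Continuous.ext_on (hK.dense_compl C hC) hf
    ((GraphUnion.continuous_leaf b).comp (by fun_prop)) hb⟩

theorem exists_setoid_le_comap [T2Space K] [SecondCountableTopology K] (hK : StronglyRigid K)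
    {f : G.GluedSpace s → G.GluedSpace s'} (hf : Continuous f) (hinj : Function.Injective f) :
    ∃ F : I → I', Function.Injective F ∧ ∀ n, s n ≤ (s' n).comap F := by
  obtain ⟨F, hF, hleaf⟩ :=
    (hasOnlyLeaves_leafMap hK).exists_index_map (leafMap_injective hK) hf hinj
  refine ⟨F, hF, fun n b d hbd => leafMap_point_eq_iff.1 (?_ :
    G.leafMap s' (F b) (G.point n) = G.leafMap s' (F d) (G.point n))⟩
  refine (GraphUnion.leaf_eq_leaf_iff.1 ?_).2
  rw [← hleaf, ← hleaf, GraphUnion.leaf_eq_leaf_iff.2 ⟨rfl, leafMap_point_eq_iff.2 hbd⟩]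

theorem mk_gluedSpace {K : Type} [TopologicalSpace K] {G : GluingData K} {I : Type u}
    {s : ℕ → Setoid I} (hK : StronglyRigid K) (hcard : #K ≤ 𝔠) (hI : 𝔠 ≤ #I) :
    #(G.GluedSpace s) = #I := by
  obtain ⟨x, hx⟩ := G.exists_height_ne_zero hK
  refine le_antisymm ?_ ?_
  · calc #(G.GluedSpace s) ≤ #(K × I) := GraphUnion.mk_le _
      _ = lift.{u} #K * #I := by rw [mk_prod, lift_uzero]
      _ ≤ #I * #I := by gcongr; exact (lift_le_continuum.2 hcard).trans hI
      _ = #I := mul_eq_self (aleph0_le_continuum.trans hI)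
  · simpa only [lift_uzero] using
      GraphUnion.lift_mk_le_mk (g := G.leafMap s) (x := x) fun _ _ => eq_of_leafMap_eq hx

end GluingData

section Parity

theorem even_card_of_involution {α : Type*} {T : Finset α} (p : α → α)
    (hmem : ∀ t ∈ T, p t ∈ T) (hinv : ∀ t ∈ T, p (p t) = t) (hne : ∀ t ∈ T, p t ≠ t) :
    Even T.card := by
  rw [← ZMod.natCast_eq_zero_iff_even, Finset.cast_card]
  exact Finset.sum_involution (fun t _ => p t) (fun _ _ => CharTwo.add_self_eq_zero 1)
    (fun t ht _ => hne t ht) hmem hinv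

/-- Otherwise, the image of `{n | n < 2 * N}` would consist of `0` and of some of the pairs
`{2 * k + 1, 2 * k + 2}`. -/
theorem exists_div_two_ne_of_bijective {σ : ℕ → ℕ} (hσ : Function.Bijective σ) (N : ℕ) :
    ∃ m ≥ N, (σ (2 * m) + 1) / 2 ≠ (σ (2 * m + 1) + 1) / 2 := by
  by_contra! h
  let p (t : ℕ) : ℕ := if Even t then t - 1 else t + 1
  let T : Finset ℕ := (Finset.range (2 * N)).image σ
  have hT (n : ℕ) : σ n ∈ T ↔ n < 2 * N := by
    simp only [T, Finset.mem_image, Finset.mem_range, hσ.injective.eq_iff, exists_eq_right]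
  have hpair (n : ℕ) (hn : 2 * N ≤ n) :
      ∃ n' ≥ 2 * N, σ n' ≠ σ n ∧ (σ n' + 1) / 2 = (σ n + 1) / 2 := by
    have hm := h (n / 2) (by omega)
    obtain hn2 | hn2 : n = 2 * (n / 2) ∨ n = 2 * (n / 2) + 1 := by omega
    · exact ⟨2 * (n / 2) + 1, by omega, hσ.injective.ne (by omega), by rw [← hm, ← hn2]⟩
    · exact ⟨2 * (n / 2), by omega, hσ.injective.ne (by omega), by rw [hm, ← hn2]⟩
  have hzero : 0 ∈ T := by
    obtain ⟨n, hn⟩ := hσ.surjective 0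
    rw [← hn, hT]
    by_contra! hle
    obtain ⟨n', -, hne, hdiv⟩ := hpair n hle
    omega
  have hmem : ∀ t ∈ T.erase 0, p t ∈ T.erase 0 := by
    intro t ht
    obtain ⟨ht0, htT⟩ := Finset.mem_erase.1 ht
    have hp0 : p t ≠ 0 := by grind
    refine Finset.mem_erase.2 ⟨hp0, ?_⟩
    obtain ⟨n, hn⟩ := hσ.surjective (p t)
    rw [← hn, hT]
    by_contra! hle
    obtain ⟨n', hn', hne, hdiv⟩ := hpair n hle
    have : σ n' = t := by grind
    exact absurd ((hT n').1 (this ▸ htT)) hn'.not_gt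
  have heven : Even (T.erase 0).card := even_card_of_involution p hmem (by grind) (by grind)
  have hcard : T.card = 2 * N :=
    (Finset.card_image_of_injective _ hσ.injective).trans (Finset.card_range _)
  have hpos : 0 < T.card := Finset.card_pos.2 ⟨0, hzero⟩
  rw [Finset.card_erase_of_mem hzero] at heven
  grind

theorem exists_strictMono_forall_ne {α : Type*} {a b : ℕ → α} (ha : Tendsto a atTop cofinite)
    (hb : Tendsto b atTop cofinite) (h : ∃ᶠ m in atTop, a m ≠ b m) :
    ∃ φ : ℕ → ℕ, StrictMono φ ∧ ∀ i k, a (φ i) ≠ b (φ k) := by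
  obtain ⟨φ, hφ, hlt⟩ := exists_seq_of_forall_finset_exists (fun m => a m ≠ b m)
    (fun m n => m < n ∧ a n ≠ b m ∧ b n ≠ a m) fun s _ => by
      have hev : ∀ᶠ n in atTop, ∀ m ∈ s, m < n ∧ a n ≠ b m ∧ b n ≠ a m :=
        (Finset.eventually_all s).2 fun m _ => (eventually_gt_atTop m).and <|
          (ha.eventually (eventually_cofinite_ne _)).and (hb.eventually (eventually_cofinite_ne _))
      exact (h.and_eventually hev).exists
  refine ⟨φ, fun i k hik => (hlt i k hik).1, fun i k => ?_⟩
  rcases lt_trichotomy i k with hik | rfl | hki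
  · exact (hlt i k hik).2.2.symm
  · exact hφ i
  · exact (hlt k i hki).2.1

end Parity

section Cube

/-- The Cantor set `{0, 1}^ℤ`. -/
def cube : Set (ℤ → ℝ) :=
  Set.pi Set.univ fun _ => {0, 1}

theorem isCompact_cube : IsCompact cube :=
  isCompact_univ_pi fun _ => (toFinite _).isCompact

theorem update_mem_cube {z : ℤ → ℝ} (hz : z ∈ cube) (k : ℤ) :
    Function.update z k (1 - z k) ∈ cube := by
  intro i _
  rcases eq_or_ne i k with rfl | hik
  · rcases hz i trivial with h | h <;> rw [Function.update_self, h] <;> simp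
  · rw [Function.update_of_ne hik]
    exact hz i trivial

theorem tendsto_update_natCast {α : Type*} [TopologicalSpace α] (z : ℤ → α) (c : ℕ → α) :
    Tendsto (fun n : ℕ => Function.update z n (c n)) atTop (𝓝 z) := by
  refine tendsto_pi_nhds.2 fun i => tendsto_const_nhds.congr' ?_
  filter_upwards [eventually_gt_atTop i.toNat] with n hn
  exact (Function.update_of_ne (by omega) _ _).symm

theorem not_countable_powerset {α : Type*} {D : Set α} (hD : D.Infinite) : ¬ (𝒫 D).Countable := by
  rw [← le_aleph0_iff_set_countable, mk_powerset, not_le]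
  have : Infinite D := infinite_coe_iff.2 hD
  exact (cantor ℵ₀).trans_le (power_le_power_left two_ne_zero (aleph0_le_mk D))

theorem MeetsUncountableClosed.exists_mem_cube {K : Set (ℤ → ℝ)} (hK : MeetsUncountableClosed K)
    {A B : Set ℤ} (hAB : Disjoint A B) (hinf : (A ∪ B)ᶜ.Infinite) :
    ∃ y ∈ K, y ∈ cube ∧ (∀ i ∈ A, y i = 0) ∧ ∀ i ∈ B, y i = 1 := by
  classical
  let F : Set (ℤ → ℝ) := cube ∩ ((⋂ i ∈ A, {y | y i = 0}) ∩ ⋂ i ∈ B, {y | y i = 1})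
  have hF : IsClosed F := isCompact_cube.isClosed.inter <| .inter
    (isClosed_biInter fun i _ => isClosed_eq (continuous_apply i) continuous_const)
    (isClosed_biInter fun i _ => isClosed_eq (continuous_apply i) continuous_const)
  let χ (S : Set ℤ) : ℤ → ℝ := (B ∪ S).indicator 1
  have hmaps : MapsTo χ (𝒫 (A ∪ B)ᶜ) F := by
    refine fun S hS => ⟨fun i _ => (indicator_eq_zero_or_self _ _ i), mem_iInter₂.2 fun i hi => ?_,
      mem_iInter₂.2 fun i hi => indicator_of_mem (Or.inl hi) 1⟩
    exact indicator_of_notMem (not_or.2 ⟨disjoint_left.1 hAB hi, fun hiS => hS hiS (Or.inl hi)⟩) 1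
  have hinj : InjOn χ (𝒫 (A ∪ B)ᶜ) := by
    intro S hS S' hS' h
    have hBS : B ∪ S = B ∪ S' := indicator_one_inj ℝ h
    have hdisj {S : Set ℤ} (hS : S ⊆ (A ∪ B)ᶜ) : (B ∪ S) \ B = S :=
      Set.union_sdiff_cancel_left fun i hi => hS hi.2 (Or.inr hi.1)
    rw [← hdisj hS, hBS, hdisj hS']
  have hunc : ¬ F.Countable := fun hc =>
    not_countable_powerset hinf (hmaps.countable_of_injOn hinj hc)
  obtain ⟨⟨y, hyK, hyF, hyA, hyB⟩⟩ :=
    mk_ne_zero_iff.1 (continuum_pos.trans_le (hK F hF hunc)).ne'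
  exact ⟨y, hyK, hyF, fun _ hi => biInter_subset_of_mem hi hyA,
    fun _ hi => biInter_subset_of_mem hi hyB⟩

theorem MeetsUncountableClosed.exists_mem_cube_natCast {K : Set (ℤ → ℝ)}
    (hK : MeetsUncountableClosed K) {a b : ℕ → ℕ} (hab : ∀ i k, a i ≠ b k) :
    ∃ y ∈ K, y ∈ cube ∧ (∀ i, y (a i) = 0) ∧ ∀ i, y (b i) = 1 := by
  let A : Set ℤ := range fun i => (a i : ℤ)
  let B : Set ℤ := range fun i => (b i : ℤ)
  have hAB : Disjoint A B := by
    rw [disjoint_left]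
    rintro _ ⟨i, rfl⟩ ⟨k, hk⟩
    exact hab i k (Nat.cast_injective hk).symm
  have hinf : (A ∪ B)ᶜ.Infinite := by
    refine (Iio_infinite (0 : ℤ)).mono ?_
    rintro _ hi (⟨k, rfl⟩ | ⟨k, rfl⟩) <;> exact (Int.natCast_nonneg _).not_gt (mem_Iio.1 hi)
  obtain ⟨y, hyK, hyc, hy0, hy1⟩ := hK.exists_mem_cube hAB hinf
  exact ⟨y, hyK, hyc, fun i => hy0 _ (mem_range_self i), fun i => hy1 _ (mem_range_self i)⟩

end Cube

section Shift

/-- The bilateral shift, iterated `n` times. -/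
def shift (n : ℤ) (z : ℤ → ℝ) : ℤ → ℝ :=
  fun i => z (i + n)

theorem continuous_shift (n : ℤ) : Continuous (shift n) :=
  continuous_pi fun _ => continuous_apply _

theorem shift_shift (m n : ℤ) (z : ℤ → ℝ) : shift m (shift n z) = shift (m + n) z :=
  funext fun i => congrArg z (by ring)

theorem shift_neg_shift (n : ℤ) (z : ℤ → ℝ) : shift n (shift (-n) z) = z := by
  rw [shift_shift, add_neg_cancel]
  exact funext fun i => congrArg z (add_zero i)

theorem isEmbedding_shift (n : ℤ) : IsEmbedding (shift n) :=
  Function.LeftInverse.isEmbedding (f := shift (-n))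
    (fun z => by simpa only [neg_neg] using shift_neg_shift (-n) z)
    (continuous_shift _) (continuous_shift n)

theorem shift_mem_cube (n : ℤ) {z : ℤ → ℝ} (hz : z ∈ cube) : shift n z ∈ cube :=
  fun _ _ => hz _ trivial

theorem isEmbedding_add_natCast (n : ℕ) : IsEmbedding fun k : ℕ∞ => k + n :=
  Function.LeftInverse.isEmbedding (f := fun k : ℕ∞ => k - (n : ℕ∞))
    (fun _ => (ENat.addLECancellable_natCast n).add_tsub_cancel_right)
    (continuous_id.enatSub continuous_const fun _ => .inr (ENat.natCast_ne_top n))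
    (continuous_add_const _)

end Shift

section ShiftSpaces

open GraphUnion

variable {K : Set (ℤ → ℝ)} {s t : ℕ}

/-- Over `K`, the graphs of the shift iterated `⌊k / 2⌋` times, at the heights `k = n + s`, and of
the constants in the Cantor set, at height `∞`. -/
def shiftLeafMap (K : Set (ℤ → ℝ)) (s : ℕ) : ℕ ⊕ cube → C(K, (ℤ → ℝ) × ℕ∞)
  | .inl n => ⟨fun y => (shift ((n + s) / 2 : ℕ) y, (n + s : ℕ)), by
      have := continuous_shift ((n + s) / 2 : ℕ)
      fun_prop⟩
  | .inr j => .const K (j, ⊤)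

/-- For `s = 0` and `s = 1`, these are two spaces each of which is homeomorphic to a clopen subset
of the other. They are not homeomorphic, since the leaves at the heights `2 * m` and `2 * m + 1`
converge to the same limits. -/
abbrev ShiftSpace (K : Set (ℤ → ℝ)) (s : ℕ) :=
  GraphUnion (shiftLeafMap K s)

theorem eq_of_shiftLeafMap_eq {i j : ℕ ⊕ cube} {y : K}
    (h : shiftLeafMap K s i y = shiftLeafMap K s j y) : i = j := by
  obtain ⟨h1, h2⟩ := Prod.ext_iff.1 h
  rcases i with m | a <;> rcases j with n | b
  · exact congrArg Sum.inl (Nat.add_right_cancel (ENat.natCast_inj.1 h2))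
  · exact absurd h2 (ENat.natCast_ne_top _)
  · exact absurd h2.symm (ENat.natCast_ne_top _)
  · exact congrArg Sum.inr (Subtype.ext h1)

theorem shiftLeafMap_injective [Nonempty K] : Function.Injective (shiftLeafMap K s) :=
  fun _ _ h => eq_of_shiftLeafMap_eq (DFunLike.congr_fun h (Classical.arbitrary K))

theorem eq_leaf_inl_iff {p : ShiftSpace K s} {n : ℕ} :
    p = leaf _ (.inl n) p.1.1 ↔ p.1.2.2 = (n + s : ℕ) := by
  refine ⟨fun h => congrArg (fun p => p.1.2.2) h, fun h => ?_⟩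
  obtain ⟨i | j, hp⟩ := exists_leaf_eq p
  · have hi : ((i + s : ℕ) : ℕ∞) = (n + s : ℕ) := (congrArg (fun p => p.1.2.2) hp).trans h
    rw [← Nat.add_right_cancel (ENat.natCast_inj.1 hi), hp]
  · exact absurd ((congrArg (fun p => p.1.2.2) hp).trans h).symm (ENat.natCast_ne_top _)

theorem exists_leaf_inr_eq {p : ShiftSpace K s} (h : p.1.2.2 = ⊤) :
    ∃ j : cube, p.1.2.1 = j ∧ leaf _ (.inr j) p.1.1 = p := by
  obtain ⟨i | j, hp⟩ := exists_leaf_eq p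
  · exact absurd ((congrArg (fun p => p.1.2.2) hp).trans h) (ENat.natCast_ne_top _)
  · exact ⟨j, (congrArg (fun p => p.1.2.1) hp).symm, hp⟩

theorem hasOnlyLeaves_shiftLeafMap (hK : StronglyRigid K) : HasOnlyLeaves (shiftLeafMap K s) := by
  refine hK.hasOnlyLeaves fun f hf _ => ?_
  have hconn := hK.preconnectedSpace.isPreconnected_univ
  rcases isEmpty_or_nonempty K with hE | ⟨⟨x₀⟩⟩
  · exact ⟨.inl 0, isEmptyElim⟩
  have hheight (x) : (f x).1.2.2 = (f x₀).1.2.2 :=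
    (hconn.image (fun x => (f x).1.2.2) (by fun_prop)).subsingleton
      (mem_image_of_mem _ trivial) (mem_image_of_mem _ trivial)
  obtain ⟨i | j, hi⟩ := exists_leaf_eq (f x₀)
  · exact ⟨.inl i, fun x => eq_leaf_inl_iff.2 ((hheight x).trans (eq_leaf_inl_iff.1 (hi ▸ rfl)))⟩
  · have htop (x) : (f x).1.2.2 = ⊤ := (hheight x).trans (congrArg (fun p => p.1.2.2) hi).symm
    choose j hj hleaf using fun x => exists_leaf_inr_eq (htop x)
    have hconst (x) : j x = j x₀ := by
      refine Subtype.ext (funext fun k => ?_)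
      rw [← hj, ← hj]
      refine eq_of_isPreconnected_of_countable_image hconn (φ := fun x => (f x).1.2.1 k)
        (by fun_prop) ((toFinite ({0, 1} : Set ℝ)).countable.mono ?_) trivial trivial
      rintro _ ⟨x, -, rfl⟩
      exact mem_of_eq_of_mem (congrFun (hj x) k) ((j x).2 k trivial)
    exact ⟨.inr (j x₀), fun x => by rw [← hconst x, hleaf]⟩

theorem isClopen_range_leaf_inl (n : ℕ) :
    IsClopen (range (leaf (shiftLeafMap K s) (.inl n))) := by
  have hrange : range (leaf (shiftLeafMap K s) (.inl n)) =
      (fun p => p.1.2.2) ⁻¹' {((n + s : ℕ) : ℕ∞)} := by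
    ext p
    refine ⟨?_, fun hp => ⟨p.1.1, (eq_leaf_inl_iff.2 hp).symm⟩⟩
    rintro ⟨y, rfl⟩
    rfl
  rw [hrange]
  exact IsClopen.preimage ⟨isClosed_singleton, ENat.isOpen_singleton (ENat.natCast_ne_top _)⟩
    (by fun_prop)

theorem not_isOpen_range_leaf_inr [Nonempty K] (j : cube) :
    ¬ IsOpen (range (leaf (shiftLeafMap K s) (.inr j))) := by
  intro hopen
  let y := Classical.arbitrary K
  let flip (k : ℕ) : cube := ⟨_, update_mem_cube j.2 k⟩
  have hlim : Tendsto (fun k => leaf (shiftLeafMap K s) (.inr (flip k)) y) atTop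
      (𝓝 (leaf _ (.inr j) y)) := by
    refine tendsto_subtype_rng.2
      (tendsto_const_nhds.prodMk_nhds (.prodMk_nhds ?_ tendsto_const_nhds))
    exact tendsto_update_natCast _ _
  obtain ⟨k, y', hk⟩ := (hlim.eventually_mem (hopen.mem_nhds ⟨y, rfl⟩)).exists
  have hj : j.1 = Function.update j.1 k (1 - j.1 k) := congrArg (fun p => p.1.2.1) hk
  have hjk := congrFun hj k
  rw [Function.update_self] at hjk
  rcases j.2 k trivial with h | h <;> rw [h] at hjk <;> norm_num at hjk

theorem isOpen_range_leaf_iff [Nonempty K] (i : ℕ ⊕ cube) :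
    IsOpen (range (leaf (shiftLeafMap K s) i)) ↔ i.isLeft := by
  rcases i with n | j
  · exact iff_of_true (isClopen_range_leaf_inl n).isOpen rfl
  · exact iff_of_false (not_isOpen_range_leaf_inr j) (by simp)

theorem mk_shiftSpace_le : #(ShiftSpace K s) ≤ 𝔠 :=
  mk_le_continuum _

theorem homeoToClopenSubset_shiftSpace {m : ℕ} (h : s + 2 * m = t + 1) :
    HomeoToClopenSubset (ShiftSpace K s) (ShiftSpace K t) := by
  let Φ : (ℤ → ℝ) × ℕ∞ → (ℤ → ℝ) × ℕ∞ := Prod.map (shift m) (· + (2 * m : ℕ))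
  let F : ℕ ⊕ cube → ℕ ⊕ cube := Sum.map Nat.succ fun j => ⟨_, shift_mem_cube m j.2⟩
  have hΦ : IsEmbedding Φ := (isEmbedding_shift m).prodMap (isEmbedding_add_natCast _)
  have hleaf (i y) : shiftLeafMap K t (F i) y = Φ (shiftLeafMap K s i y) := by
    rcases i with n | j
    · have hn : n + 1 + t = n + s + 2 * m := by omega
      refine Prod.ext ?_ ?_
      · change shift ((n + 1 + t) / 2 : ℕ) y = shift m (shift ((n + s) / 2 : ℕ) y)
        rw [shift_shift, hn, Nat.add_mul_div_left _ _ two_pos, Nat.cast_add, add_comm]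
      · exact congrArg ((↑) : ℕ → ℕ∞) hn
    · exact Prod.ext rfl (top_add _).symm
  have hmaps : MapsTo (Prod.map id Φ) (GraphUnion (shiftLeafMap K s))
      (GraphUnion (shiftLeafMap K t)) :=
    fun p ⟨i, hi⟩ => ⟨F i, (hleaf i p.1).trans (congrArg Φ hi)⟩
  have hF : range F = {.inl 0}ᶜ := by
    ext (n | j)
    · cases n <;> simp [F]
    · refine iff_of_true ⟨.inr ⟨_, shift_mem_cube (-m) j.2⟩, ?_⟩ Sum.inr_ne_inl
      exact congrArg Sum.inr (Subtype.ext (shift_neg_shift _ _))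
  refine ⟨range hmaps.restrict, ?_, ⟨((IsEmbedding.id.prodMap hΦ).restrict hmaps).toHomeomorph⟩⟩
  rw [range_eq_compl_range_leaf (F := F)
    (fun i y => Subtype.ext (Prod.ext rfl (hleaf i y).symm))
    (fun _ _ _ => eq_of_shiftLeafMap_eq) hF]
  exact (isClopen_range_leaf_inl 0).compl

theorem exists_bijective_of_homeomorph [Nonempty K] (hK : StronglyRigid K)
    (f : ShiftSpace K s ≃ₜ ShiftSpace K t) :
    ∃ (σ : ℕ → ℕ) (τ : cube → cube), Function.Bijective σ ∧
      (∀ n y, f (leaf _ (.inl n) y) = leaf _ (.inl (σ n)) y) ∧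
      ∀ j y, f (leaf _ (.inr j) y) = leaf _ (.inr (τ j)) y := by
  obtain ⟨e, he⟩ := (hasOnlyLeaves_shiftLeafMap hK).exists_index_equiv
    (hasOnlyLeaves_shiftLeafMap hK) shiftLeafMap_injective shiftLeafMap_injective f
  have hleft (i) : (e i).isLeft ↔ i.isLeft := by
    have himage : f '' range (leaf _ i) = range (leaf _ (e i)) := by
      rw [← range_comp]
      exact congrArg range (funext (he i))
    rw [← isOpen_range_leaf_iff (K := K) (s := t), ← himage, f.isOpen_image, isOpen_range_leaf_iff]
  choose σ hσ using fun n => Sum.isLeft_iff.1 ((hleft (.inl n)).2 rfl)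
  choose τ hτ using fun j => Sum.isRight_iff.1 (Sum.not_isLeft.1 (mt (hleft (.inr j)).1 (by simp)))
  refine ⟨σ, τ, ⟨fun m n hmn => Sum.inl_injective (e.injective ?_), fun n => ?_⟩,
    fun n y => ?_, fun j y => ?_⟩
  · rw [hσ, hσ, hmn]
  · obtain ⟨m, hm⟩ := Sum.isLeft_iff.1 ((hleft (e.symm (.inl n))).1 (by simp))
    exact ⟨m, Sum.inl_injective (by rw [← hσ, ← hm, e.apply_symm_apply])⟩
  · rw [he, hσ]
  · rw [he, hτ]

theorem tendsto_leaf_inl_iff {ν : ℕ → ℕ} (hν : Tendsto ν atTop atTop) {y : K} {j : cube} :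
    Tendsto (fun i => leaf (shiftLeafMap K s) (.inl (ν i)) y) atTop (𝓝 (leaf _ (.inr j) y)) ↔
      Tendsto (fun i => shift ((ν i + s) / 2 : ℕ) y) atTop (𝓝 j) := by
  have hheight : Tendsto (fun i => ((ν i + s : ℕ) : ℕ∞)) atTop (𝓝 ⊤) :=
    ENat.tendsto_natCast_nhds_top.comp (tendsto_atTop_mono (fun i => Nat.le_add_right _ s) hν)
  rw [tendsto_subtype_rng]
  refine ⟨fun h => ?_, fun h => tendsto_const_nhds.prodMk_nhds (h.prodMk_nhds hheight)⟩
  exact ((continuous_fst.comp continuous_snd).tendsto _).comp h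

section Pairing

variable {f : ShiftSpace K 0 → ShiftSpace K t} {σ : ℕ → ℕ} {τ : cube → cube}

theorem tendsto_eval_of_tendsto_shift (hf : Continuous f) (hσ : Function.Injective σ)
    (hleft : ∀ n y, f (leaf _ (.inl n) y) = leaf _ (.inl (σ n)) y)
    (hright : ∀ j y, f (leaf _ (.inr j) y) = leaf _ (.inr (τ j)) y) {ν : ℕ → ℕ}
    (hν : Tendsto ν atTop atTop) {y : K} {j : cube}
    (h : Tendsto (fun i => shift (ν i / 2 : ℕ) y) atTop (𝓝 j)) :
    Tendsto (fun i => y.1 ((σ (ν i) + t) / 2 : ℕ)) atTop (𝓝 ((τ j).1 0)) := by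
  have hlim := (hf.tendsto _).comp ((tendsto_leaf_inl_iff hν).2 h)
  simp only [Function.comp_def, hleft, hright] at hlim
  have hshift := (tendsto_leaf_inl_iff (hσ.nat_tendsto_atTop.comp hν)).1 hlim
  simpa only [shift, zero_add, Function.comp_def] using ((continuous_apply 0).tendsto _).comp hshift

/-- Otherwise, there are infinitely many exceptions, and `K` contains a point whose coordinates
tell the limits of the images of the leaves `2 * m` and `2 * m + 1` apart. -/
theorem eventually_div_two_eq (hK : MeetsUncountableClosed K) (hf : Continuous f)
    (hσ : Function.Injective σ) (hleft : ∀ n y, f (leaf _ (.inl n) y) = leaf _ (.inl (σ n)) y)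
    (hright : ∀ j y, f (leaf _ (.inr j) y) = leaf _ (.inr (τ j)) y) :
    ∀ᶠ m in atTop, (σ (2 * m) + t) / 2 = (σ (2 * m + 1) + t) / 2 := by
  by_contra hne
  have hdouble (c : ℕ) : Tendsto (fun m => 2 * m + c) atTop atTop :=
    tendsto_atTop_mono (fun m => by dsimp only [id]; omega) tendsto_id
  have hdiv (c : ℕ) : Tendsto (fun m => (σ (2 * m + c) + t) / 2) atTop cofinite := by
    rw [Nat.cofinite_eq_atTop]
    exact (Nat.tendsto_div_const_atTop two_ne_zero).comp <|
      tendsto_atTop_mono (fun m => Nat.le_add_right _ t) (hσ.nat_tendsto_atTop.comp (hdouble c))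
  obtain ⟨φ, hφ, hφne⟩ := exists_strictMono_forall_ne (hdiv 0) (hdiv 1) (not_eventually.1 hne)
  obtain ⟨y, hyK, hyc, hy0, hy1⟩ := hK.exists_mem_cube_natCast hφne
  obtain ⟨j, hj, ψ, hψ, hlim⟩ := isCompact_cube.tendsto_subseq fun i => shift_mem_cube (φ i) hyc
  have heval {c : ℕ} (hc : c < 2) :
      Tendsto (fun i => y ((σ (2 * φ (ψ i) + c) + t) / 2 : ℕ)) atTop (𝓝 ((τ ⟨j, hj⟩).1 0)) := by
    refine tendsto_eval_of_tendsto_shift (y := ⟨y, hyK⟩) hf hσ hleft hright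
      ((hdouble c).comp (hφ.comp hψ).tendsto_atTop) (hlim.congr fun i => ?_)
    have : (2 * φ (ψ i) + c) / 2 = φ (ψ i) := by omega
    simp only [Function.comp_apply, this]
  have hzero : (τ ⟨j, hj⟩).1 0 = 0 :=
    tendsto_nhds_unique ((heval two_pos).congr fun i => hy0 _) tendsto_const_nhds
  have hone : (τ ⟨j, hj⟩).1 0 = 1 :=
    tendsto_nhds_unique ((heval one_lt_two).congr fun i => hy1 _) tendsto_const_nhds
  exact zero_ne_one (hzero.symm.trans hone)

end Pairing

theorem isEmpty_homeomorph_shiftSpace [Nonempty K] (hK : StronglyRigid K)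
    (hK' : MeetsUncountableClosed K) : IsEmpty (ShiftSpace K 0 ≃ₜ ShiftSpace K 1) := by
  refine ⟨fun f => ?_⟩
  obtain ⟨σ, τ, hσ, hleft, hright⟩ := exists_bijective_of_homeomorph hK f
  obtain ⟨N, hN⟩ := eventually_atTop.1
    (eventually_div_two_eq hK' f.continuous hσ.injective hleft hright)
  obtain ⟨m, hm, hne⟩ := exists_div_two_ne_of_bijective hσ N
  exact hne (hN m hm)

end ShiftSpaces

section Sums

variable {X X' A B : Type*} [TopologicalSpace X] [TopologicalSpace X'] [TopologicalSpace A]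
  [TopologicalSpace B]

theorem metrizableSpace_sum [TopologicalSpace.MetrizableSpace X]
    [TopologicalSpace.MetrizableSpace A] : TopologicalSpace.MetrizableSpace (X ⊕ A) := by
  let := TopologicalSpace.metrizableSpaceMetric X
  let := TopologicalSpace.metrizableSpaceMetric A
  let : MetricSpace (X ⊕ A) := Metric.metricSpaceSum
  infer_instance

theorem homeoToClopenSubset_sum (h : HomeoToClopenSubset A B) :
    HomeoToClopenSubset (X ⊕ A) (X ⊕ B) := by
  obtain ⟨t, ht, ⟨e⟩⟩ := h
  let f : X ⊕ A → X ⊕ B := Sum.map id (Subtype.val ∘ e)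
  have hclosed : IsClosedMap f :=
    IsClosedMap.id.sumMap (ht.isClosed.isClosedMap_subtype_val.comp e.isClosedMap)
  have hopen : IsOpenMap f :=
    IsOpenMap.id.sumMap (ht.isOpen.isOpenMap_subtype_val.comp e.isOpenMap)
  have hf : IsOpenEmbedding f := .of_continuous_injective_isOpenMap
    (continuous_id.sumMap (continuous_subtype_val.comp e.continuous))
    (Function.injective_id.sumMap (Subtype.val_injective.comp e.injective)) hopen
  exact ⟨range f, ⟨hclosed.isClosed_range, hf.isOpen_range⟩, ⟨hf.isEmbedding.toHomeomorph⟩⟩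

theorem exists_inl_comp_of_noInjCont [PreconnectedSpace X] (hXB : NoInjCont X B) {f : X → X' ⊕ B}
    (hf : Continuous f) (hinj : Function.Injective f) :
    ∃ g : X → X', Continuous g ∧ Function.Injective g ∧ f = Sum.inl ∘ g := by
  rcases isClopen_iff.1 (IsClopen.preimage ⟨isClosed_range_inl, isOpen_range_inl⟩ hf) with h | h
  · have hinr (x) : ∃ b, f x = Sum.inr b := by
      rcases hx : f x with a | b
      · exact (h.subset ⟨a, hx.symm⟩ : x ∈ (∅ : Set X)).elim
      · exact ⟨b, rfl⟩
    choose g hg using hinr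
    obtain rfl : f = Sum.inr ∘ g := funext hg
    exact (hXB ⟨g, IsEmbedding.inr.continuous_iff.2 hf, hinj.of_comp⟩).elim
  · choose g hg using fun x => h.superset (mem_univ x)
    obtain rfl : Sum.inl ∘ g = f := funext hg
    exact ⟨g, IsEmbedding.inl.continuous_iff.2 hf, hinj.of_comp, rfl⟩

theorem exists_inr_comp_of_symm_comp_inl {f : X ⊕ A ≃ₜ X' ⊕ B} {g : X' → X}
    (hg : f.symm ∘ Sum.inl = Sum.inl ∘ g) :
    ∃ k : A → B, Continuous k ∧ f ∘ Sum.inr = Sum.inr ∘ k := by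
  have hinr (a) : ∃ b, f (Sum.inr a) = Sum.inr b := by
    rcases hx : f (Sum.inr a) with x | b
    · have := congrFun hg x
      rw [Function.comp_apply, ← hx, f.symm_apply_apply] at this
      exact (Sum.inr_ne_inl this).elim
    · exact ⟨b, rfl⟩
  choose k hk using hinr
  exact ⟨k, IsEmbedding.inr.continuous_iff.2 ((f.continuous.comp continuous_inr).congr hk),
    funext hk⟩

theorem nonempty_homeomorph_of_sum [PreconnectedSpace X] [PreconnectedSpace X']
    (hXB : NoInjCont X B) (hXA : NoInjCont X' A) (f : X ⊕ A ≃ₜ X' ⊕ B) : Nonempty (A ≃ₜ B) := by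
  obtain ⟨g, -, -, hg⟩ := exists_inl_comp_of_noInjCont hXB (f.continuous.comp continuous_inl)
    (f.injective.comp Sum.inl_injective)
  obtain ⟨g', -, -, hg'⟩ := exists_inl_comp_of_noInjCont hXA (f.symm.continuous.comp continuous_inl)
    (f.symm.injective.comp Sum.inl_injective)
  obtain ⟨k, hk, hfk⟩ := exists_inr_comp_of_symm_comp_inl hg'
  obtain ⟨l, hl, hfl⟩ := exists_inr_comp_of_symm_comp_inl (f := f.symm) hg
  have hlk (a) : l (k a) = a := Sum.inr_injective (α := X) <| calc
    Sum.inr (l (k a)) = f.symm (Sum.inr (k a)) := (congrFun hfl (k a)).symm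
    _ = f.symm (f (Sum.inr a)) := congrArg f.symm (congrFun hfk a).symm
    _ = Sum.inr a := f.symm_apply_apply _
  have hkl (b) : k (l b) = b := Sum.inr_injective (α := X') <| calc
    Sum.inr (k (l b)) = f (Sum.inr (l b)) := (congrFun hfk (l b)).symm
    _ = f (f.symm (Sum.inr b)) := congrArg f (congrFun hfl b).symm
    _ = Sum.inr b := f.apply_symm_apply _
  exact ⟨⟨⟨k, l, hlk, hkl⟩, hk, hl⟩⟩

end Sums

section PatternSpaces

theorem one_lt_rank_int_fun : 1 < Module.rank ℝ (ℤ → ℝ) := by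
  have hindep := (Pi.linearIndependent_single_one ℤ ℝ).cardinal_le_rank
  exact one_lt_aleph0.trans_le ((aleph0_le_mk ℤ).trans hindep)

theorem exists_stronglyRigid_gluingData : ∃ K : Set (ℤ → ℝ),
    StronglyRigid K ∧ MeetsUncountableClosed K ∧ Nonempty (GluingData K) := by
  let k (n : ℕ) : ℤ → ℝ := Pi.single 0 n
  obtain ⟨K, hkK, hK, hK'⟩ := exists_stronglyRigid
    (fun C hC => hC.dense_compl ℝ) (fun C hC =>
      (hC.isPathConnected_compl_of_one_lt_rank one_lt_rank_int_fun).isConnected.isPreconnected)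
    (countable_range k)
  let φ : C(K, ℝ) := ⟨fun x => x.1 0, (continuous_apply 0).comp continuous_subtype_val⟩
  exact ⟨K, hK, hK', GluingData.nonempty_of_map_eq_natCast φ
    (k := fun n => ⟨k n, hkK (mem_range_self n)⟩)
    fun n => Pi.single_eq_same (M := fun _ => ℝ) 0 (n : ℝ)⟩

instance preconnectedSpace_gluedSpace_pattern {K V : Type*} [TopologicalSpace K]
    [PreconnectedSpace K] [LinearOrder V] {G : GluingData K} {q : V} :
    PreconnectedSpace (G.GluedSpace (pattern q)) :=
  GraphUnion.preconnectedSpace fun i j => .tail (b := (i.1, j.2))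
    (.single ⟨G.point 0, GluingData.leafMap_point_eq_iff.2 (rfl : i.1 = (i.1, j.2).1)⟩)
    ⟨G.point 1, GluingData.leafMap_point_eq_iff.2 (rfl : (i.1, j.2).2 = j.2)⟩

variable {K : Set (ℤ → ℝ)} {G : GluingData K} {V : Type u} [LinearOrder V] {q q' : V}
  {s t : ℕ}

/-- The glued space of the pattern of `q`, which determines `q`, together with one of the shift
spaces, which for `s = 0` and `s = 1` form a pair as in the theorem. -/
abbrev LabeledShiftSpace (G : GluingData K) (q : V) (s : ℕ) :=
  G.GluedSpace (pattern q) ⊕ ShiftSpace K s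

theorem mk_labeledShiftSpace (hK : StronglyRigid K) (hV : 𝔠 ≤ #V) :
    #(LabeledShiftSpace G q s) = #V := by
  have haleph : ℵ₀ ≤ #V := aleph0_le_continuum.trans hV
  have hprod : #(V × V) = #V := by rw [mk_prod, lift_id, mul_eq_self haleph]
  have hglued : #(G.GluedSpace (pattern q)) = #V := by
    rw [GluingData.mk_gluedSpace hK (mk_le_continuum K) (hV.trans_eq hprod.symm), hprod]
  rw [mk_sum, hglued, lift_uzero]
  refine add_eq_left haleph ?_
  exact (lift_le_continuum.2 mk_shiftSpace_le).trans hV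

variable [Nontrivial V]

theorem noInjCont_gluedSpace_shiftSpace (hK : StronglyRigid K) :
    NoInjCont (G.GluedSpace (pattern q)) (ShiftSpace K s) := by
  obtain ⟨x, y, hxy⟩ := exists_pair_ne V
  have hne : (x, x) ≠ (x, y) := fun h => hxy (congrArg Prod.snd h)
  have hequiv : pattern q 0 (x, x) (x, y) := (rfl : (x, x).1 = (x, y).1)
  exact (hasOnlyLeaves_shiftLeafMap hK).noInjCont (GluingData.leafMap_injective hK) hne
    (GluingData.leafMap_point_eq_iff.2 hequiv) fun _ _ _ => eq_of_shiftLeafMap_eq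

theorem stmt10Pair_labeledShiftSpace (hK : StronglyRigid K) (hK' : MeetsUncountableClosed K)
    (hV : 𝔠 ≤ #V) :
    Stmt10Pair #V (LabeledShiftSpace G q 0) (LabeledShiftSpace G q 1) := by
  refine ⟨metrizableSpace_sum, metrizableSpace_sum, mk_labeledShiftSpace hK hV,
    mk_labeledShiftSpace hK hV,
    homeoToClopenSubset_sum (homeoToClopenSubset_shiftSpace (m := 1) rfl),
    homeoToClopenSubset_sum (homeoToClopenSubset_shiftSpace (m := 0) rfl), ⟨fun f => ?_⟩⟩
  have := hK.preconnectedSpace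
  have : Nonempty K := ⟨G.point 0⟩
  obtain ⟨e⟩ := nonempty_homeomorph_of_sum (noInjCont_gluedSpace_shiftSpace hK)
    (noInjCont_gluedSpace_shiftSpace hK) f
  exact (isEmpty_homeomorph_shiftSpace hK hK').false e

theorem noInjCont_labeledShiftSpace [WellFoundedLT V] [OrderTop V] (hK : StronglyRigid K)
    (hq : q ≠ q') : NoInjCont (LabeledShiftSpace G q s) (LabeledShiftSpace G q' t) := by
  rintro ⟨f, hf, hinj⟩
  have := hK.preconnectedSpace
  obtain ⟨g, hg, hginj, -⟩ := exists_inl_comp_of_noInjCont (noInjCont_gluedSpace_shiftSpace hK)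
    (hf.comp continuous_inl) (hinj.comp Sum.inl_injective)
  obtain ⟨F, hF, hle⟩ := GluingData.exists_setoid_le_comap hK hg hginj
  exact hq (eq_of_pattern_le hF hle)

end PatternSpaces

end ClopenCantorBernstein

open ClopenCantorBernstein in
theorem statement10 (α : Cardinal.{u}) (hα : Cardinal.continuum ≤ α)
    (Q : Type u) (hQ : #Q = α) :
    ∃ (G H : Q → Type u) (tG : ∀ q, TopologicalSpace (G q))
      (tH : ∀ q, TopologicalSpace (H q)),
      (∀ q, @Stmt10Pair α (G q) (H q) (tG q) (tH q)) ∧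
      (∀ q q', q ≠ q' →
        @NoInjCont (G q) (tG q) (G q') (tG q') ∧
        @NoInjCont (G q) (tG q) (H q') (tH q') ∧
        @NoInjCont (H q) (tH q) (G q') (tG q') ∧
        @NoInjCont (H q) (tH q) (H q') (tH q')) := by
  obtain ⟨K, hK, hK', ⟨G⟩⟩ := exists_stronglyRigid_gluingData
  obtain ⟨_, _⟩ := exists_wellFoundedLT Q
  have hV : #(WithTop Q) = α :=
    mk_option.trans (hQ.symm ▸ add_one_of_aleph0_le (aleph0_le_continuum.trans hα))
  have : Nonempty Q := mk_ne_zero_iff.1 (hQ ▸ (continuum_pos.trans_le hα).ne')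
  have hpair (q : Q) : Stmt10Pair α (LabeledShiftSpace G (q : WithTop Q) 0)
      (LabeledShiftSpace G (q : WithTop Q) 1) :=
    hV ▸ stmt10Pair_labeledShiftSpace hK hK' (hα.trans_eq hV.symm)
  have hno {q q' : Q} (hq : q ≠ q') (s t : ℕ) :
      NoInjCont (LabeledShiftSpace G (q : WithTop Q) s) (LabeledShiftSpace G (q' : WithTop Q) t) :=
    noInjCont_labeledShiftSpace hK (WithTop.coe_injective.ne hq)
  exact ⟨_, _, _, _, hpair, fun _ _ hq => ⟨hno hq 0 0, hno hq 0 1, hno hq 1 0, hno hq 1 1⟩⟩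
end

section
/- For every cardinal number α ≥ 𝔠, there exists a family {Y_q : q ∈ Q} of metrizable topological spaces indexed by a set Q with |Q| = α, each space of cardinality α, such that the spaces are pairwise non-homeomorphic and for any two distinct indices q ≠ q' there exists no injective continuous map from Y_q into Y_{q'}. -/
universe u

open Cardinal

/-!
Transfinite recursion of length `𝔠` in the style of Bernstein produces countably many disjoint
subsets `B n` of the plane that are connected and rigid: every injective continuous map from `B n`
to the union of these sets is an inclusion, even if it is only defined outside a countable set.

Given a digraph with countably many edge colors, glue a copy of `B n ∪ {0, 1}` to its vertices for
every edge of color `n`. Under an injective continuous map between two such spaces, only countably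
many points of an edge are sent to vertices, so by connectedness the others are sent to a single
edge; by rigidity this edge has the same color and the map is the identity in the parameter.
Continuity carries this over to the end points, so the map induces a homomorphism of colored
digraphs.

It remains to find `α` colored digraphs on `α` vertices without homomorphisms between them. On a
well-order with a greatest element, take the order as the first color and let another color mark a
single vertex. For every `y` that is the supremum of a strictly increasing sequence, choose such a
sequence, and let the remaining colors record its members. Already without the mark the identity is
then the only endomorphism, so a homomorphism between two of these digraphs forces their marked
vertices to agree.
-/

open Filter Set Topology

section DisjointTransversals

variable {X : Type u} {κ : Cardinal.{u}}

theorem le_mk_sdiff_of_lt (hκ : ℵ₀ ≤ κ) {S T : Set X} (hS : κ ≤ #S) (hT : #T < κ) :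
    κ ≤ #(S \ T : Set X) := by
  by_contra! hlt
  exact (add_lt_of_lt hκ hlt hT).not_ge (hS.trans (le_mk_sdiff_add_mk S T))

theorem exists_injective_forall_ne (X : Type*) [Infinite X] :
    ∃ φ : X → X, φ.Injective ∧ ∀ x, φ x ≠ x := by
  have hcard : #(X × Bool) = #X := by
    simpa using Cardinal.mul_eq_left (aleph0_le_mk X)
      ((natCast_lt_aleph0 (n := 2)).le.trans (aleph0_le_mk X)) two_ne_zero
  obtain ⟨e⟩ := Cardinal.eq.1 hcard
  let σ : X × Bool ≃ X × Bool := Equiv.prodCongrRight fun _ => Equiv.boolNot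
  refine ⟨e.symm.trans (σ.trans e), Equiv.injective _, fun x hx => ?_⟩
  have : σ (e.symm x) = e.symm x := e.injective (by simpa using hx)
  simpa [σ] using congrArg Prod.snd this

/-- `φ` moves every point of the large set `A`, injectively: the obstruction that is to be defeated
by choosing points `x ∈ A` and keeping `φ x` out of the sets under construction. -/
structure MovesInjectively (κ : Cardinal.{u}) (φ : X → X) (A : Set X) : Prop where
  le_mk : κ ≤ #A
  injOn : InjOn φ A
  apply_ne : ∀ x ∈ A, φ x ≠ x

theorem MovesInjectively.exists_notMem {φ : X → X} {A N : Set X} (h : MovesInjectively κ φ A)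
    (hκ : ℵ₀ ≤ κ) (hN : #N < κ) : ∃ x ∈ A, x ∉ N ∧ φ x ∉ N := by
  have himage : κ ≤ #(φ '' (A \ N)) := by
    rw [mk_image_eq_of_injOn _ _ (h.injOn.mono sdiff_subset)]
    exact le_mk_sdiff_of_lt hκ h.le_mk hN
  have hsub : ¬ φ '' (A \ N) ⊆ N := fun hsub => (himage.trans (mk_le_mk_of_subset hsub)).not_gt hN
  obtain ⟨_, ⟨x, hx, rfl⟩, hφx⟩ := not_subset.1 hsub
  exact ⟨x, hx.1, hx.2, hφx⟩

theorem exists_injective_forall_apply_ne (hκ : ℵ₀ ≤ κ) {T : Type u} (hT : #T ≤ κ)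
    {φ : T → X → X} {A : T → Set X} (hφ : ∀ t, MovesInjectively κ (φ t) (A t)) :
    ∃ p : T → X, (∀ t, p t ∈ A t) ∧ p.Injective ∧ ∀ s t, φ s (p s) ≠ p t := by
  obtain ⟨r, hwo, hr⟩ := exists_ord_eq T
  have exists_next (t : T) (prev : ∀ s, r s t → X) : ∃ x ∈ A t, ∀ s h,
      (x ≠ prev s h ∧ x ≠ φ s (prev s h)) ∧ φ t x ≠ prev s h := by
    have hinit : #{s // r s t} < κ :=
      ((Ordinal.card_typein t).symm.trans_lt (Cardinal.card_typein_lt t hr)).trans_le hT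
    let N : Set X := range (fun s : {s // r s t} => prev s s.2) ∪
      range fun s : {s // r s t} => φ s (prev s s.2)
    have hN : #N < κ := (mk_union_le _ _).trans_lt
      (add_lt_of_lt hκ (mk_range_le.trans_lt hinit) (mk_range_le.trans_lt hinit))
    obtain ⟨x, hxA, hxN, hφx⟩ := (hφ t).exists_notMem hκ hN
    refine ⟨x, hxA, fun s h => ⟨⟨?_, ?_⟩, ?_⟩⟩
    · exact fun e => hxN (.inl ⟨⟨s, h⟩, e.symm⟩)
    · exact fun e => hxN (.inr ⟨⟨s, h⟩, e.symm⟩)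
    · exact fun e => hφx (.inl ⟨⟨s, h⟩, e.symm⟩)
  choose next hnextA hnext using exists_next
  let p : T → X := hwo.wf.fix next
  have hp (t : T) : p t = next t fun s _ => p s := hwo.wf.fix_eq next t
  have hpA (t : T) : p t ∈ A t := hp t ▸ hnextA t _
  have hlt {s t : T} (h : r s t) : (p t ≠ p s ∧ p t ≠ φ s (p s)) ∧ φ t (p t) ≠ p s := by
    rw [hp t]
    exact hnext t _ s h
  refine ⟨p, hpA, fun s t hst => ?_, fun s t hst => ?_⟩
  · rcases trichotomous_of r s t with h | h | h
    · exact absurd hst.symm (hlt h).1.1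
    · exact h
    · exact absurd hst (hlt h).1.1
  · rcases trichotomous_of r s t with h | rfl | h
    · exact (hlt h).1.2 hst.symm
    · exact (hφ s).apply_ne _ (hpA s) hst
    · exact (hlt h).2 hst

theorem exists_pairwise_disjoint_le_mk (hκ : ℵ₀ ≤ κ) {ι K : Type u} (hι : #ι ≤ κ) (hK : #K ≤ κ)
    {φ : K → X → X} {A : K → Set X} (hφ : ∀ k, MovesInjectively κ (φ k) (A k)) :
    ∃ B : ι → Set X, Pairwise (Function.onFun Disjoint B) ∧
      ∀ i k, κ ≤ #{x | x ∈ B i ∩ A k ∧ φ k x ∉ ⋃ j, B j} := by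
  have hT : #(ι × K × κ.out) ≤ κ := by
    simp only [mk_prod, lift_id, mk_out]
    exact mul_le_of_le hκ hι (mul_le_of_le hκ hK le_rfl)
  obtain ⟨p, hpA, hpinj, hφp⟩ := exists_injective_forall_apply_ne hκ hT fun t => hφ t.2.1
  refine ⟨fun i => range fun s => p (i, s), fun i j hij => ?_, fun i k => ?_⟩
  · refine disjoint_left.2 ?_
    rintro _ ⟨s, rfl⟩ ⟨t, ht⟩
    exact hij (congrArg Prod.fst (hpinj ht)).symm
  · refine (mk_out κ).ge.trans
      (mk_le_of_injective (f := fun a => ⟨p (i, k, a), ⟨⟨_, rfl⟩, hpA (i, k, a)⟩, ?_⟩) ?_)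
    · simp only [mem_iUnion, mem_range, not_exists]
      exact fun j s => (hφp (i, k, a) (j, s)).symm
    · intro a b hab
      simpa using hpinj (congrArg Subtype.val hab)

end DisjointTransversals

section CardinalityOfContinuousData

variable {X Y : Type*} [TopologicalSpace X]

theorem mk_isClosed_le_continuum (X : Type u) [TopologicalSpace X] [SecondCountableTopology X] :
    #{F : Set X // IsClosed F} ≤ 𝔠 := by
  borelize X
  have hmeas := MeasurableSpace.cardinal_measurableSet_le_continuum
    ((le_aleph0_iff_set_countable.2
      (MeasurableSpace.countable_countableGeneratingSet (α := X))).trans aleph0_le_continuum)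
  rw [MeasurableSpace.generateFrom_countableGeneratingSet] at hmeas
  exact (mk_le_mk_of_subset fun F (hF : IsClosed F) => hF.measurableSet).trans hmeas

theorem mk_le_continuum_of_secondCountable (X : Type u) [TopologicalSpace X]
    [SecondCountableTopology X] [T1Space X] : #X ≤ 𝔠 :=
  (mk_le_of_injective (f := fun x : X => (⟨{x}, isClosed_singleton⟩ : {F : Set X // IsClosed F}))
    fun _ _ h => by simpa using h).trans (mk_isClosed_le_continuum X)

/-- The function whose value at `x` is the limit of `(c n).2` as `(c n).1` tends to `x`, with a junk
value where there is no such limit. A continuous function on a separable set is recovered in this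
way from countably many of its values. -/
noncomputable def limitAlong [TopologicalSpace Y] [Nonempty Y] (c : ℕ → X × Y) (x : X) : Y :=
  limUnder (comap (fun n => (c n).1) (𝓝 x)) fun n => (c n).2

theorem exists_eqOn_limitAlong [SecondCountableTopology X] [TopologicalSpace Y] [T2Space Y]
    [Nonempty Y] {S : Set X} (hS : S.Nonempty) {f : X → Y} (hf : ContinuousOn f S) :
    ∃ c : ℕ → X × Y, EqOn (limitAlong c) f S := by
  have : Nonempty S := hS.to_subtype
  obtain ⟨d, hd⟩ := TopologicalSpace.exists_dense_seq S
  refine ⟨fun n => (d n, f (d n)), fun x hx => ?_⟩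
  have hcl : x ∈ closure (range fun n => (d n : X)) := by
    have := hd ⟨x, hx⟩
    rwa [closure_subtype, ← range_comp] at this
  have : NeBot (comap (fun n => (d n : X)) (𝓝 x)) :=
    comap_neBot_iff_frequently.2 (mem_closure_iff_frequently.1 hcl)
  have hlim : Tendsto (fun n => (d n : X)) (comap (fun n => (d n : X)) (𝓝 x)) (𝓝[S] x) :=
    tendsto_nhdsWithin_iff.2 ⟨tendsto_comap, .of_forall fun n => (d n).2⟩
  exact ((hf x hx).tendsto.comp hlim).limUnder_eq

theorem exists_mk_le_continuum_eqOn_continuousOn (X Y : Type u) [TopologicalSpace X]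
    [SecondCountableTopology X] [T1Space X] [TopologicalSpace Y] [SecondCountableTopology Y]
    [T2Space Y] [Nonempty X] [Nonempty Y] :
    ∃ 𝓕 : Set (X → Y), #𝓕 ≤ 𝔠 ∧
      ∀ (S : Set X) (f : X → Y), ContinuousOn f S → ∃ g ∈ 𝓕, EqOn g f S := by
  refine ⟨range limitAlong, mk_range_le.trans ?_, fun S f hf => ?_⟩
  · have hX := mk_le_continuum_of_secondCountable X
    have hY := mk_le_continuum_of_secondCountable Y
    calc #(ℕ → X × Y) = (#X * #Y) ^ ℵ₀ := by simp
      _ ≤ (𝔠 * 𝔠) ^ ℵ₀ := power_le_power_right (mul_le_mul' hX hY)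
      _ = 𝔠 := by simp
  · rcases S.eq_empty_or_nonempty with rfl | hS
    · exact ⟨_, ⟨Classical.arbitrary _, rfl⟩, eqOn_empty _ _⟩
    · obtain ⟨c, hc⟩ := exists_eqOn_limitAlong hS hf
      exact ⟨_, ⟨c, rfl⟩, hc⟩

end CardinalityOfContinuousData

section LargeSets

variable {X : Type u}

theorem continuum_le_mk_sdiff {S C : Set X} (hS : 𝔠 ≤ #S) (hC : C.Countable) :
    𝔠 ≤ #(S \ C : Set X) :=
  le_mk_sdiff_of_lt aleph0_le_continuum hS
    ((le_aleph0_iff_set_countable.2 hC).trans_lt aleph0_lt_continuum)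

theorem nonempty_of_continuum_le_mk {S : Set X} (hS : 𝔠 ≤ #S) : S.Nonempty :=
  nonempty_coe_sort.1 (mk_ne_zero_iff.1 (continuum_pos.trans_le hS).ne')

variable [TopologicalSpace X]

theorem continuum_le_mk_of_isClosed [PolishSpace X] {F : Set X} (hF : IsClosed F)
    (hF' : ¬ F.Countable) : 𝔠 ≤ #F := by
  obtain ⟨f, hfF, -, hf⟩ := hF.exists_nat_bool_injection_of_not_countable hF'
  have := lift_mk_le_lift_mk_of_injective
    (f := fun x => (⟨f x, hfF ⟨x, rfl⟩⟩ : F)) fun x y h => hf (by simpa using h)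
  simpa using this

theorem not_countable_of_isOpen [BaireSpace X] [T1Space X] [PerfectSpace X] {U : Set X}
    (hU : IsOpen U) (hne : U.Nonempty) : ¬ U.Countable := by
  intro hc
  have hdense : Dense (⋂ x ∈ U, ({x}ᶜ : Set X)) :=
    dense_biInter_of_isOpen (fun _ _ => isOpen_compl_singleton) hc
      fun x _ => dense_compl_singleton x
  obtain ⟨x, hxU, hx⟩ := hdense.inter_open_nonempty U hU hne
  exact mem_iInter₂.1 hx x hxU rfl

theorem not_countable_of_mem_nhds [BaireSpace X] [T1Space X] [PerfectSpace X] {x : X} {U : Set X}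
    (hU : U ∈ 𝓝 x) : ¬ U.Countable := fun hc =>
  not_countable_of_isOpen isOpen_interior ⟨x, mem_interior_iff_mem_nhds.2 hU⟩
    (hc.mono interior_subset)

/-- The Bernstein-type condition that makes a set dense and connected: no uncountable closed set
avoids it. -/
def MeetsUncountableClosed (S : Set X) : Prop :=
  ∀ F, IsClosed F → ¬ F.Countable → (S ∩ F).Nonempty

namespace MeetsUncountableClosed

variable {S : Set X}

theorem dense [BaireSpace X] [T1Space X] [RegularSpace X] [PerfectSpace X]
    (hS : MeetsUncountableClosed S) : Dense S := fun x => by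
  rw [mem_closure_iff_nhds_basis (closed_nhds_basis x)]
  exact fun F hF => hS F hF.2 (not_countable_of_mem_nhds hF.1)

/-- Two disjoint open sets covering `S` miss only countably many points of the whole space, and a
connected space stays connected without these. -/
theorem isPreconnected (hX : ∀ C : Set X, C.Countable → IsPreconnected Cᶜ)
    (hS : MeetsUncountableClosed S) (hdense : Dense S) : IsPreconnected S := by
  rw [isPreconnected_iff_subset_of_disjoint]
  intro u v hu hv huv hdisj
  have huv_empty : u ∩ v = ∅ := by
    by_contra hne
    obtain ⟨x, hx, hxS⟩ := hdense.inter_open_nonempty _ (hu.inter hv) (nonempty_iff_ne_empty.2 hne)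
    exact notMem_empty x (hdisj ▸ ⟨hxS, hx⟩)
  have hcount : (u ∪ v)ᶜ.Countable := by
    by_contra hunc
    obtain ⟨x, hxS, hx⟩ := hS _ (hu.union hv).isClosed_compl hunc
    exact hx (huv hxS)
  have hconn : IsPreconnected (u ∪ v) := compl_compl (u ∪ v) ▸ hX _ hcount
  exact (isPreconnected_iff_subset_of_disjoint.1 hconn u v hu hv subset_rfl
    (by simp [huv_empty])).imp huv.trans huv.trans

end MeetsUncountableClosed

/-- Disjoint Bernstein-type sets between which no injective continuous map exists apart from the
inclusions, even after countably many points have been removed from its domain. -/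
structure IsRigidFamily {ι : Type*} (B : ι → Set X) : Prop where
  pairwise_disjoint : Pairwise (Function.onFun Disjoint B)
  continuum_le_mk_inter : ∀ i F, IsClosed F → ¬ F.Countable → 𝔠 ≤ #(B i ∩ F : Set X)
  eqOn_id : ∀ i C, C.Countable → ∀ f : X → X, ContinuousOn f (B i \ C) → InjOn f (B i \ C) →
    MapsTo f (B i \ C) (⋃ j, B j) → EqOn f id (B i \ C)

namespace IsRigidFamily

variable {ι : Type*} {B : ι → Set X}

theorem meetsUncountableClosed_sdiff (hB : IsRigidFamily B) (i : ι) {C : Set X} (hC : C.Countable) :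
    MeetsUncountableClosed (B i \ C) := by
  intro F hF hF'
  have := continuum_le_mk_sdiff (hB.continuum_le_mk_inter i F hF hF') hC
  rw [← inter_sdiff_right_comm]
  exact nonempty_of_continuum_le_mk this

theorem sdiff (hB : IsRigidFamily B) {D : Set X} (hD : D.Countable) :
    IsRigidFamily fun i => B i \ D where
  pairwise_disjoint i j hij := (hB.pairwise_disjoint hij).mono sdiff_subset sdiff_subset
  continuum_le_mk_inter i F hF hF' := by
    rw [← inter_sdiff_right_comm]
    exact continuum_le_mk_sdiff (hB.continuum_le_mk_inter i F hF hF') hD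
  eqOn_id i C hC f hf hinj hmaps := by
    rw [sdiff_sdiff] at hf hinj hmaps ⊢
    exact hB.eqOn_id i _ (hD.union hC) f hf hinj
      (hmaps.mono_right (iUnion_mono fun _ => sdiff_subset))

end IsRigidFamily

theorem exists_isRigidFamily [PolishSpace X] [PerfectSpace X] [Nonempty X] {ι : Type u}
    (hι : #ι ≤ 𝔠) : ∃ B : ι → Set X, IsRigidFamily B := by
  have : Infinite X := infinite_univ_iff.1 fun hfin =>
    not_countable_of_isOpen isOpen_univ univ_nonempty hfin.countable
  obtain ⟨σ, hσ, hσ'⟩ := exists_injective_forall_ne X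
  obtain ⟨𝓕, h𝓕, hcont⟩ := exists_mk_le_continuum_eqOn_continuousOn X X
  let K := {k : {F : Set X // IsClosed F} × ↥(insert σ 𝓕) //
    ∃ A ⊆ k.1.1, MovesInjectively 𝔠 k.2.1 A}
  have hK : #K ≤ 𝔠 := by
    refine (mk_subtype_le _).trans ?_
    rw [mk_prod, lift_id, lift_id]
    refine mul_le_of_le aleph0_le_continuum (mk_isClosed_le_continuum X) (mk_insert_le.trans ?_)
    exact add_le_of_le aleph0_le_continuum h𝓕 (one_le_aleph0.trans aleph0_le_continuum)
  choose A hAF hA using fun k : K => k.2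
  obtain ⟨B, hdisj, hB⟩ := exists_pairwise_disjoint_le_mk aleph0_le_continuum hι hK hA
  have hclosed (i : ι) (F : Set X) (hF : IsClosed F) (hF' : ¬ F.Countable) :
      𝔠 ≤ #(B i ∩ F : Set X) := by
    let k : K := ⟨(⟨F, hF⟩, ⟨σ, mem_insert _ _⟩), F, subset_rfl,
      continuum_le_mk_of_isClosed hF hF', hσ.injOn, fun x _ => hσ' x⟩
    exact (hB i k).trans (mk_le_mk_of_subset fun x hx => ⟨hx.1.1, hAF k hx.1.2⟩)
  refine ⟨B, hdisj, hclosed, fun i C hC f hf hinj hmaps x hx => ?_⟩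
  by_contra hne
  have hlarge : 𝔠 ≤ #{y | y ∈ B i \ C ∧ f y ≠ y} := by
    have hmoved : {y | f y ≠ y} ∈ 𝓝[B i \ C] x :=
      (hf x hx).tendsto.prodMk_nhds (tendsto_id.mono_left nhdsWithin_le_nhds)
        (isClosed_diagonal.isOpen_compl.mem_nhds hne)
    obtain ⟨F, ⟨hFx, hF⟩, hsub⟩ := (nhdsWithin_hasBasis (closed_nhds_basis x) _).mem_iff.1 hmoved
    refine (continuum_le_mk_sdiff (hclosed i F hF (not_countable_of_mem_nhds hFx)) hC).trans
      (mk_le_mk_of_subset fun y hy => ?_)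
    have hy' : y ∈ B i \ C := ⟨hy.1.1, hy.2⟩
    exact ⟨hy', hsub ⟨hy.1.2, hy'⟩⟩
  obtain ⟨g, hg, hgf⟩ := hcont _ f hf
  let k : K := ⟨(⟨univ, isClosed_univ⟩, ⟨g, mem_insert_of_mem _ hg⟩), _, subset_univ _, hlarge,
    (hinj.congr hgf.symm).mono fun y hy => hy.1, fun y hy => (hgf hy.1).trans_ne hy.2⟩
  obtain ⟨y, ⟨⟨hyB, -⟩, hy⟩, hyC⟩ := nonempty_of_continuum_le_mk (continuum_le_mk_sdiff (hB i k) hC)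
  have hgy : g y = f y := hgf ⟨hyB, hyC⟩
  exact hy (hgy.symm ▸ hmaps ⟨hyB, hyC⟩ : g y ∈ ⋃ j, B j)

end LargeSets

section RigidRelations

/-- `l` is a strictly increasing sequence with supremum `y`; such a sequence exists for the limit
elements `y` of cofinality `ω`. -/
def IsLadder {V : Type*} [Preorder V] (l : ℕ → V) (y : V) : Prop :=
  StrictMono l ∧ IsLUB (range l) y

theorem IsLadder.lt {V : Type*} [Preorder V] {l : ℕ → V} {y : V} (h : IsLadder l y) (n : ℕ) :
    l n < y :=
  (h.1 n.lt_succ_self).trans_le (h.2.1 ⟨n + 1, rfl⟩)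

variable {V : Type*} [LinearOrder V]

theorem IsLadder.exists_lt {l : ℕ → V} {x y : V} (h : IsLadder l y) (hx : x < y) :
    ∃ n, x < l n := by
  obtain ⟨_, ⟨n, rfl⟩, hn⟩ := (lt_isLUB_iff h.2).1 hx
  exact ⟨n, hn⟩

variable [WellFoundedLT V]

theorem exists_isLUB_of_wellFoundedLT [OrderTop V] (s : Set V) : ∃ y, IsLUB s y := by
  obtain ⟨y, hy, hmin⟩ := (wellFounded_lt (α := V)).has_min (upperBounds s) ⟨⊤, fun _ _ => le_top⟩
  exact ⟨y, hy, fun z hz => not_lt.1 (hmin z hz)⟩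

/-- If `h x ≠ x` then `x < h x`. The supremum `y` of the orbit of `x` is fixed by `h`, hence so is
the chosen ladder of `y`; but `h` pushes `x` beyond all members of this ladder. -/
theorem eq_id_of_strictMono_of_map_ladder [OrderTop V] {ladder : V → ℕ → V}
    (hladder : ∀ l y, IsLadder l y → IsLadder (ladder y) y) {h : V → V} (hmono : StrictMono h)
    (hmap : ∀ y, IsLadder (ladder y) y →
      IsLadder (ladder (h y)) (h y) ∧ ∀ n, h (ladder y n) = ladder (h y) n) : h = id := by
  funext x
  by_contra hne
  have hlt : x < h x := hmono.le_apply.lt_of_ne' hne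
  obtain ⟨y, hlub⟩ := exists_isLUB_of_wellFoundedLT (range fun k => h^[k] x)
  have horbit : IsLadder (fun k => h^[k] x) y := ⟨hmono.strictMono_iterate_of_lt_map hlt, hlub⟩
  have hy : IsLadder (ladder y) y := hladder _ y horbit
  obtain ⟨hhy, hmap_y⟩ := hmap y hy
  have hfix : h y = y := by
    refine (hhy.2.2 ?_).antisymm hmono.le_apply
    rintro _ ⟨n, rfl⟩
    obtain ⟨k, hk⟩ := horbit.exists_lt (hy.lt n)
    calc ladder (h y) n = h (ladder y n) := (hmap_y n).symm
      _ ≤ h (h^[k] x) := (hmono hk).le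
      _ = h^[k + 1] x := (Function.iterate_succ_apply' h k x).symm
      _ ≤ y := (horbit.lt (k + 1)).le
  obtain ⟨n, hn⟩ := hy.exists_lt (horbit.lt 0)
  have hfix_n : h (ladder y n) = ladder y n := by rw [hmap_y, hfix]
  have hbound (k : ℕ) : h^[k] x < ladder y n := by
    rw [← Function.iterate_fixed hfix_n k]
    exact hmono.iterate k hn
  obtain ⟨k, hk⟩ := horbit.exists_lt (hy.lt n)
  exact (hbound k).not_gt hk

end RigidRelations

section ColoredRelations

/-- The colored digraph on a well-order whose edges of color `0` are the order, of color `1` a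
single loop marking `q`, and of color `n + 2` lead from the `n`-th member of the ladder of `y`
to `y`. -/
def markedLadderGraph {V : Type*} [Preorder V] (ladder : V → ℕ → V) (q : V) : ℕ → V → V → Prop
  | 0, x, y => x < y
  | 1, x, y => x = q ∧ y = q
  | n + 2, x, y => IsLadder (ladder y) y ∧ x = ladder y n

theorem eq_of_hom_markedLadderGraph {V : Type*} [LinearOrder V] [WellFoundedLT V] [OrderTop V]
    {ladder : V → ℕ → V} (hladder : ∀ l y, IsLadder l y → IsLadder (ladder y) y) {q q' : V}
    {h : V → V} (hh : ∀ n x y, markedLadderGraph ladder q n x y →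
      markedLadderGraph ladder q' n (h x) (h y)) : q = q' := by
  have hid : h = id := eq_id_of_strictMono_of_map_ladder hladder (fun x y => hh 0 x y)
    fun y hy => ⟨(hh 2 _ y ⟨hy, rfl⟩).1, fun n => (hh (n + 2) _ y ⟨hy, rfl⟩).2⟩
  have hq : h q = q' := (hh 1 q q ⟨rfl, rfl⟩).1
  exact (congrFun hid q).symm.trans hq

theorem exists_coloredGraph_antichain {α : Cardinal.{u}} (hα : ℵ₀ ≤ α) :
    ∃ V : Type u, #V = α ∧ ∃ R : V → ℕ → V → V → Prop, ∀ q q' (h : V → V),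
      (∀ n x y, R q n x y → R q' n (h x) (h y)) → q = q' := by
  let V : Type u := WithTop α.ord.ToType
  have hV : #V = α := by
    change #(Option α.ord.ToType) = α
    rw [mk_option, mk_ord_toType, add_one_eq hα]
  have hex (y : V) : ∃ l, ∀ l', IsLadder l' y → IsLadder l y := by
    by_cases h : ∃ l, IsLadder l y
    · exact h.imp fun _ hl _ _ => hl
    · exact ⟨fun _ => y, fun l' hl' => absurd ⟨l', hl'⟩ h⟩
  choose ladder hladder using hex
  exact ⟨V, hV, markedLadderGraph ladder, fun q q' h =>
    eq_of_hom_markedLadderGraph fun l y => hladder y l⟩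

end ColoredRelations

section Realization

/-- The bounded families of pairs of complex numbers indexed by the points of `V` and the triples
`(i, s, t)`, regarded as possible edges of color `i` from `s` to `t`. Colored digraphs on `V` are
realized as subspaces of this metric space. -/
noncomputable abbrev GraphSpace (ι V : Type*) :=
  lp (fun _ : V ⊕ ι × V × V => ℂ × ℂ) ⊤

namespace GraphSpace

variable {ι V : Type*}

open scoped Classical in
/-- The point of the realization that represents `v`. -/
noncomputable def vertex (v : V) : GraphSpace ι V :=
  lp.single ⊤ (.inl v) (1, 0)

open scoped Classical in
/-- The plane spanned by the edge `e`, containing its source at `p = 0` and its target at `p = 1`.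
The coordinate at `.inr e` vanishes at these two points only; it separates `e` from all other edges
and determines `p` as the quotient of its entries, even if `e` is a loop. -/
noncomputable def edge (e : ι × V × V) (p : ℂ) : GraphSpace ι V :=
  (1 - p) • vertex e.2.1 + p • vertex e.2.2 +
    lp.single (E := fun _ => ℂ × ℂ) ⊤ (.inr e) (p * (1 - p), p * (1 - p) * p)

/-- The edge `e` without its end points. -/
def openEdge (e : ι × V × V) : Set (GraphSpace ι V) :=
  edge e '' {0, 1}ᶜ

/-- The coordinate on the open edge `e` that inverts `edge e`, with the junk value `0` at the end
points. -/
noncomputable def param (e : ι × V × V) (y : GraphSpace ι V) : ℂ :=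
  (y (.inr e)).2 / (y (.inr e)).1

theorem continuous_apply (j : V ⊕ ι × V × V) : Continuous fun y : GraphSpace ι V => y j :=
  (lp.evalCLM ℂ (fun _ : V ⊕ ι × V × V => ℂ × ℂ) ⊤ j).continuous

theorem isOpen_apply_fst_ne_zero (j : V ⊕ ι × V × V) :
    IsOpen {y : GraphSpace ι V | (y j).1 ≠ 0} :=
  isOpen_ne.preimage (continuous_fst.comp (continuous_apply j))

theorem continuous_edge (e : ι × V × V) : Continuous (edge e) := by
  classical
  have hsingle : Continuous (lp.single (E := fun _ : V ⊕ ι × V × V => ℂ × ℂ) ⊤ (.inr e)) :=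
    (lp.isometry_single _).continuous
  unfold edge
  fun_prop

theorem edge_zero (e : ι × V × V) : edge e 0 = vertex e.2.1 := by
  simp [edge, Prod.mk_zero_zero]

theorem edge_one (e : ι × V × V) : edge e 1 = vertex e.2.2 := by
  simp [edge, Prod.mk_zero_zero]

theorem vertex_apply_fst_ne_zero_iff {v w : V} :
    ((vertex v : GraphSpace ι V) (.inl w)).1 ≠ 0 ↔ w = v := by
  classical
  by_cases h : w = v <;> simp [vertex, h]

theorem vertex_injective : (vertex : V → GraphSpace ι V).Injective := fun _ _ h =>
  (vertex_apply_fst_ne_zero_iff (ι := ι)).1 (h ▸ vertex_apply_fst_ne_zero_iff.2 rfl)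

theorem vertex_apply_inr (v : V) (e : ι × V × V) : (vertex v : GraphSpace ι V) (.inr e) = 0 := by
  classical
  simp [vertex]

theorem edge_apply_inr [DecidableEq (ι × V × V)] (e e' : ι × V × V) (p : ℂ) :
    edge e p (.inr e') = if e' = e then (p * (1 - p), p * (1 - p) * p) else 0 := by
  classical
  rw [edge, lp.coeFn_add, Pi.add_apply, lp.coeFn_add, Pi.add_apply, lp.coeFn_smul, lp.coeFn_smul,
    Pi.smul_apply, Pi.smul_apply, vertex_apply_inr, vertex_apply_inr]
  split_ifs with h <;> simp [h]

theorem mul_one_sub_ne_zero {p : ℂ} (hp : p ∈ ({0, 1} : Set ℂ)ᶜ) : p * (1 - p) ≠ 0 := by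
  simp only [mem_compl_iff, mem_insert_iff, mem_singleton_iff, not_or] at hp
  exact mul_ne_zero hp.1 (sub_ne_zero.2 (Ne.symm hp.2))

theorem param_edge (e : ι × V × V) {p : ℂ} (hp : p ∈ ({0, 1} : Set ℂ)ᶜ) :
    param e (edge e p) = p := by
  classical
  rw [param, edge_apply_inr, if_pos rfl]
  exact mul_div_cancel_left₀ p (mul_one_sub_ne_zero hp)

theorem apply_fst_ne_zero_iff_of_mem_openEdge {e e' : ι × V × V} {y : GraphSpace ι V}
    (hy : y ∈ openEdge e) : (y (.inr e')).1 ≠ 0 ↔ e' = e := by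
  classical
  obtain ⟨p, hp, rfl⟩ := hy
  rw [edge_apply_inr]
  split_ifs with h
  · exact iff_of_true (mul_one_sub_ne_zero hp) h
  · exact iff_of_false (not_not.2 rfl) h

theorem edge_param {e : ι × V × V} {y : GraphSpace ι V} (hy : y ∈ openEdge e) :
    edge e (param e y) = y := by
  obtain ⟨p, hp, rfl⟩ := hy
  rw [param_edge e hp]

theorem continuousOn_param (e : ι × V × V) : ContinuousOn (param e) (openEdge e) :=
  ContinuousOn.div (continuous_snd.comp (continuous_apply _)).continuousOn
    (continuous_fst.comp (continuous_apply _)).continuousOn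
    fun _ hy => (apply_fst_ne_zero_iff_of_mem_openEdge hy).2 rfl

theorem exists_subset_openEdge_of_isPreconnected {S : Set (GraphSpace ι V)} (hS : IsPreconnected S)
    (hne : S.Nonempty) (hsub : S ⊆ ⋃ e, openEdge e) : ∃ e : ι × V × V, S ⊆ openEdge e := by
  obtain ⟨x, hx⟩ := hne
  obtain ⟨e, hxe⟩ := mem_iUnion.1 (hsub hx)
  let U (e : ι × V × V) : Set (GraphSpace ι V) := {y | (y (.inr e)).1 ≠ 0}
  have hU (e : ι × V × V) : IsOpen (U e) := isOpen_apply_fst_ne_zero _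
  have mem_U {y e e'} (hy : y ∈ openEdge e) : y ∈ U e' ↔ e' = e :=
    apply_fst_ne_zero_iff_of_mem_openEdge hy
  have hSU : S ⊆ U e := by
    refine (isPreconnected_iff_subset_of_disjoint.1 hS (U e) (⋃ e' ≠ e, U e') (hU e)
      (isOpen_biUnion fun e' _ => hU e') (fun y hy => ?_) ?_).resolve_right fun h => ?_
    · obtain ⟨e', hye'⟩ := mem_iUnion.1 (hsub hy)
      by_cases he : e' = e
      · exact .inl ((mem_U hye').2 he.symm)
      · exact .inr (mem_biUnion he ((mem_U hye').2 rfl))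
    · refine eq_empty_of_forall_notMem fun y ⟨hy, hye, hye'⟩ => ?_
      obtain ⟨e₀, hye₀⟩ := mem_iUnion.1 (hsub hy)
      obtain ⟨e', he', hye'⟩ := mem_iUnion₂.1 hye'
      exact he' (((mem_U hye₀).1 hye').trans ((mem_U hye₀).1 hye).symm)
    · obtain ⟨e', he', hxe'⟩ := mem_iUnion₂.1 (h hx)
      exact he' ((mem_U hxe).1 hxe')
  refine ⟨e, fun y hy => ?_⟩
  obtain ⟨e', hye'⟩ := mem_iUnion.1 (hsub hy)
  exact (mem_U hye').1 (hSU hy) ▸ hye'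

theorem discreteTopology_range_vertex :
    DiscreteTopology (range (vertex : V → GraphSpace ι V)) := by
  rw [discreteTopology_iff_isOpen_singleton]
  rintro ⟨_, v, rfl⟩
  convert (isOpen_apply_fst_ne_zero (.inl v)).preimage continuous_subtype_val using 1
  ext ⟨_, w, rfl⟩
  rw [mem_singleton_iff, Subtype.ext_iff, vertex_injective.eq_iff, eq_comm]
  exact vertex_apply_fst_ne_zero_iff.symm

theorem countable_inter_preimage_range_vertex {T : Type*} [TopologicalSpace T]
    [SecondCountableTopology T] {S : Set T} {γ : T → GraphSpace ι V} (hγ : ContinuousOn γ S)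
    (hinj : InjOn γ S) : (S ∩ γ ⁻¹' range vertex).Countable := by
  have := discreteTopology_range_vertex (ι := ι) (V := V)
  have hmaps : MapsTo γ (S ∩ γ ⁻¹' range vertex) (range vertex) := fun _ hx => hx.2
  have : DiscreteTopology ↥(S ∩ γ ⁻¹' range vertex) := .of_continuous_injective
    ((hγ.mono inter_subset_left).mapsToRestrict hmaps)
    (hmaps.restrict_inj.2 (hinj.mono inter_subset_left))
  exact TopologicalSpace.separableSpace_iff_countable.1 inferInstance

end GraphSpace

open GraphSpace

/-- The topological realization of a digraph with colored edges, in which the set `B i` takes the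
role of the open unit interval for the edges of color `i`. -/
def realization {ι V : Type*} (B : ι → Set ℂ) (R : ι → V → V → Prop) : Set (GraphSpace ι V) :=
  range vertex ∪ {y | ∃ i s t, R i s t ∧ y ∈ edge (i, s, t) '' B i}

theorem mk_realization {ι : Type} {V : Type u} (hι : lift.{u} #ι ≤ #V) (hV : 𝔠 ≤ #V)
    (B : ι → Set ℂ) (R : ι → V → V → Prop) : #(realization B R) = #V := by
  have hV₀ : ℵ₀ ≤ #V := aleph0_le_continuum.trans hV
  refine le_antisymm ((mk_union_le _ _).trans (add_le_of_le hV₀ mk_range_le ?_))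
    ((mk_range_eq _ vertex_injective).ge.trans (mk_le_mk_of_subset subset_union_left))
  have hsub : {y | ∃ i s t, R i s t ∧ y ∈ edge (i, s, t) '' B i} ⊆
      range fun x : (ι × V × V) × ℂ => edge x.1 x.2 := by
    rintro _ ⟨i, s, t, -, p, -, rfl⟩
    exact ⟨((i, s, t), p), rfl⟩
  refine (mk_le_mk_of_subset hsub).trans (mk_range_le.trans ?_)
  simp only [mk_prod, lift_id, lift_uzero, mk_complex, lift_continuum]
  exact mul_le_of_le hV₀ (mul_le_of_le hV₀ hι (mul_eq_self hV₀).le) hV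

variable {ι V W : Type*} {B : ι → Set ℂ} {R : ι → V → V → Prop} {R' : ι → W → W → Prop}

theorem edge_mem_realization {i : ι} {s t : V} (h : R i s t) {p : ℂ} (hp : p ∈ B i ∪ {0, 1}) :
    edge (i, s, t) p ∈ realization B R := by
  rcases hp with hp | rfl | rfl
  · exact .inr ⟨i, s, t, h, p, hp, rfl⟩
  · exact .inl ⟨s, (edge_zero (i, s, t)).symm⟩
  · exact .inl ⟨t, (edge_one (i, s, t)).symm⟩

theorem mem_iUnion_openEdge_of_mem_realization (hB : ∀ i, B i ⊆ {0, 1}ᶜ) {y : GraphSpace ι V}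
    (hy : y ∈ realization B R) (hy' : y ∉ range vertex) : y ∈ ⋃ e, openEdge e := by
  obtain ⟨i, s, t, -, p, hp, rfl⟩ := hy.resolve_left hy'
  exact mem_iUnion.2 ⟨(i, s, t), p, hB i hp, rfl⟩

theorem param_mem_of_mem_realization (hB : ∀ i, B i ⊆ {0, 1}ᶜ) {i : ι} {s t : V}
    {y : GraphSpace ι V} (hy : y ∈ realization B R) (hy' : y ∈ openEdge (i, s, t)) :
    R i s t ∧ param (i, s, t) y ∈ B i := by
  have hne := (apply_fst_ne_zero_iff_of_mem_openEdge hy').2 rfl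
  rcases hy with ⟨v, rfl⟩ | ⟨i', s', t', h, p, hp, rfl⟩
  · simp [vertex_apply_inr] at hne
  · obtain ⟨rfl, rfl, rfl⟩ : i = i' ∧ s = s' ∧ t = t' := by
      simpa using (apply_fst_ne_zero_iff_of_mem_openEdge ⟨p, hB i' hp, rfl⟩).1 hne
    exact ⟨h, (param_edge _ (hB i hp)).symm ▸ hp⟩

/-- Away from countably many points, `γ` stays on one open edge, where its parameter is a map to
which the rigidity of `B` applies. -/
theorem IsRigidFamily.exists_eqOn_edge (hB : IsRigidFamily B) (hB' : ∀ i, B i ⊆ {0, 1}ᶜ) {i : ι}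
    {γ : ℂ → GraphSpace ι V} (hγ : ContinuousOn γ (B i ∪ {0, 1})) (hinj : InjOn γ (B i))
    (hmaps : MapsTo γ (B i) (realization B R)) :
    ∃ s t, R i s t ∧ EqOn γ (edge (i, s, t)) (B i ∪ {0, 1}) := by
  let C : Set ℂ := B i ∩ γ ⁻¹' range vertex
  have hC : C.Countable :=
    countable_inter_preimage_range_vertex (hγ.mono subset_union_left) hinj
  have hsub : B i \ C ⊆ B i ∪ {0, 1} := sdiff_subset.trans subset_union_left
  have hmeets := hB.meetsUncountableClosed_sdiff i hC
  have hconn : IsPreconnected (B i \ C) := hmeets.isPreconnected (fun D hD =>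
    (hD.isConnected_compl_of_one_lt_rank (by simp [Complex.rank_real_complex])).isPreconnected)
    hmeets.dense
  obtain ⟨⟨j, s, t⟩, hedge⟩ : ∃ e, γ '' (B i \ C) ⊆ openEdge e := by
    refine exists_subset_openEdge_of_isPreconnected (hconn.image γ (hγ.mono hsub))
      (hmeets.dense.nonempty.image γ) ?_
    rintro _ ⟨x, hx, rfl⟩
    exact mem_iUnion_openEdge_of_mem_realization hB' (hmaps hx.1) fun hv => hx.2 ⟨hx.1, hv⟩
  rw [← mapsTo_iff_image_subset] at hedge
  have hparam {x : ℂ} (hx : x ∈ B i \ C) : R j s t ∧ param (j, s, t) (γ x) ∈ B j :=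
    param_mem_of_mem_realization hB' (hmaps hx.1) (hedge hx)
  have hid : EqOn (param (j, s, t) ∘ γ) id (B i \ C) := by
    refine hB.eqOn_id i C hC _ ((continuousOn_param _).comp (hγ.mono hsub) hedge)
      (fun x hx y hy hxy => ?_) fun x hx => mem_iUnion.2 ⟨j, (hparam hx).2⟩
    exact hinj hx.1 hy.1
      (by rw [← edge_param (hedge hx), ← edge_param (hedge hy)]; exact congrArg _ hxy)
  obtain ⟨x, hx⟩ := hmeets.dense.nonempty
  have hxj : x ∈ B j := by simpa [show param (j, s, t) (γ x) = x from hid hx] using (hparam hx).2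
  obtain rfl : i = j := hB.pairwise_disjoint.eq (not_disjoint_iff.2 ⟨x, hx.1, hxj⟩)
  refine ⟨s, t, (hparam hx).1, EqOn.of_subset_closure (fun y hy => ?_) hγ
    (continuous_edge _).continuousOn hsub (hmeets.dense.closure_eq ▸ subset_univ _)⟩
  exact (edge_param (hedge hy)).symm.trans (congrArg _ (hid hy))

theorem IsRigidFamily.exists_hom_of_continuousOn [Nonempty W] (hB : IsRigidFamily B)
    (hB' : ∀ i, B i ⊆ {0, 1}ᶜ) {F : GraphSpace ι V → GraphSpace ι W}
    (hF : ContinuousOn F (realization B R)) (hinj : InjOn F (realization B R))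
    (hmaps : MapsTo F (realization B R) (realization B R')) :
    ∃ h : V → W, ∀ i s t, R i s t → R' i (h s) (h t) := by
  refine ⟨fun v => (vertex (ι := ι)).invFun (F (vertex v)), fun i s t hR => ?_⟩
  have hedge : MapsTo (edge (i, s, t)) (B i ∪ {0, 1}) (realization B R) := fun p hp =>
    edge_mem_realization hR hp
  have hedge' := hedge.mono_left (subset_union_left (s := B i))
  have hedge_inj : InjOn (edge (i, s, t)) (B i) := fun p hp p' hp' h => by
    rw [← param_edge (i, s, t) (hB' i hp), h, param_edge _ (hB' i hp')]
  obtain ⟨s', t', hR', heq⟩ := hB.exists_eqOn_edge hB'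
    (hF.comp (continuous_edge (i, s, t)).continuousOn hedge) (hinj.comp hedge_inj hedge')
    (hmaps.comp hedge')
  have hs : F (vertex s) = vertex s' := by
    simpa [edge_zero] using heq (show (0 : ℂ) ∈ B i ∪ {0, 1} by simp)
  have ht : F (vertex t) = vertex t' := by
    simpa [edge_one] using heq (show (1 : ℂ) ∈ B i ∪ {0, 1} by simp)
  simpa [hs, ht, Function.leftInverse_invFun vertex_injective _] using hR'

theorem IsRigidFamily.noInjCont_realization [Nonempty W] (hB : IsRigidFamily B)
    (hB' : ∀ i, B i ⊆ {0, 1}ᶜ) (hRR' : ¬ ∃ h : V → W, ∀ i s t, R i s t → R' i (h s) (h t)) :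
    NoInjCont (realization B R) (realization B R') := by
  rintro ⟨f, hf, hinj⟩
  let F : GraphSpace ι V → GraphSpace ι W := Function.extend Subtype.val (fun y => (f y).1) 0
  have hF (y : realization B R) : F y = f y := Subtype.val_injective.extend_apply _ _ y
  refine hRR' (hB.exists_hom_of_continuousOn (F := F) hB' ?_ ?_ ?_)
  · rw [continuousOn_iff_continuous_domRestrict]
    exact (continuous_subtype_val.comp hf).congr fun y => (hF y).symm
  · intro x hx y hy hxy
    rw [hF ⟨x, hx⟩, hF ⟨y, hy⟩] at hxy
    exact congrArg Subtype.val (hinj (Subtype.val_injective hxy))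
  · intro y hy
    exact hF ⟨y, hy⟩ ▸ (f ⟨y, hy⟩).2

end Realization

theorem statement12 (α : Cardinal.{u}) (hα : Cardinal.continuum ≤ α) :
    ∃ (Q : Type u), #Q = α ∧
      ∃ (Y : Q → Type u) (tY : ∀ q, TopologicalSpace (Y q)),
        (∀ q, @TopologicalSpace.MetrizableSpace (Y q) (tY q)) ∧
        (∀ q, #(Y q) = α) ∧
        (∀ q q', q ≠ q' → IsEmpty (@Homeomorph (Y q) (Y q') (tY q) (tY q'))) ∧
        (∀ q q', q ≠ q' → @NoInjCont (Y q) (tY q) (Y q') (tY q')) := by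
  have hα₀ : ℵ₀ ≤ α := aleph0_le_continuum.trans hα
  obtain ⟨V, rfl, R, hR⟩ := exists_coloredGraph_antichain hα₀
  obtain ⟨B, hB⟩ := exists_isRigidFamily (X := ℂ) (mk_nat.trans_le aleph0_le_continuum)
  have hB₀₁ : IsRigidFamily fun n => B n \ {0, 1} := hB.sdiff (Set.toFinite {0, 1}).countable
  let Y (q : V) := realization (fun n => B n \ {0, 1}) (R q)
  have hnoInj (q q' : V) (hne : q ≠ q') : NoInjCont (Y q) (Y q') := by
    have : Nonempty V := ⟨q⟩
    exact hB₀₁.noInjCont_realization (fun _ _ hp => hp.2) fun ⟨h, hh⟩ => hne (hR q q' h hh)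
  have hmk (q : V) : #(Y q) = #V := mk_realization (by simpa using hα₀) hα _ _
  refine ⟨V, rfl, fun q => Y q, fun _ => inferInstance, fun _ => inferInstance, hmk,
    fun q q' hne => ⟨fun φ => ?_⟩, hnoInj⟩
  exact hnoInj q q' hne ⟨φ, φ.continuous, φ.injective⟩
end
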